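/- arXiv:math/9711223 — 5 statements merged into one kernel-verified Lean document; each statement's English description precedes it below -/
import Mathlib

section
/- There exists a bijection F from (ℤ^ω) \ X onto ℝ \ ℚ, where X is the set of all f ∈ ℤ^ω that are eventually equal to −1 together with the constantly-0 sequence, such that for every A ⊆ ℝ \ ℚ, the set A is ℚ-nowhere dense if and only if F⁻¹(A) is small. -/
/-- `X ⊆ ℝ` is `ℚ`-nowhere dense: for every rational `q` there is a nonzero integer `k`
such that the open interval with endpoints `q` and `q + 1/k` is disjoint from `X`. -/
def QNowhereDense (X : Set ℝ) : Prop :=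
  ∀ q : ℚ, ∃ k : ℤ, k ≠ 0 ∧
    ∀ x ∈ X, x ∉ Set.Ioo (min (q : ℝ) ((q : ℝ) + 1 / (k : ℝ))) (max (q : ℝ) ((q : ℝ) + 1 / (k : ℝ)))

/-- `X ⊆ ℤ^ω` is small: for every `n` and every `σ : Fin n → ℤ` there is `k ∈ ℤ` such that
the set of values `f n` for `f ∈ X` extending `σ` lies entirely below `k` or entirely above `k`. -/
def SmallSet (X : Set (ℕ → ℤ)) : Prop :=
  ∀ (n : ℕ) (σ : Fin n → ℤ), ∃ k : ℤ,
    (∀ f ∈ X, (∀ i : Fin n, f (i : ℕ) = σ i) → f n < k) ∨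
    (∀ f ∈ X, (∀ i : Fin n, f (i : ℕ) = σ i) → k < f n)

/-- `f` is eventually equal to `-1`. -/
def EventuallyNegOne (f : ℕ → ℤ) : Prop := ∃ N : ℕ, ∀ n ≥ N, f n = -1

/-- The exceptional set `X`: sequences eventually `-1`, together with the constant `0` sequence. -/
def ExceptionalSet : Set (ℕ → ℤ) := {f | EventuallyNegOne f} ∪ {fun _ => (0 : ℤ)}

/-!
Split the line into a tree of half-open intervals whose endpoints avoid the countable dense set
`D`: inside an interval take the first point `d` of an enumeration of `D`, and cut what remains into
countably many children, numbered `0, 1, 2, …` from the left endpoint up to `d` and `…, -2, -1` from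
`d` to the right endpoint. Every point of `D` is the centre of exactly one node, and every point
outside `D` lies on a unique branch, which is read off as an integer sequence. A branch shrinks to a
point of the line, except that one ending in `-1, -1, …` converges to an excluded right endpoint and
the constant `0` branch converges to `-∞`. The left neighbourhoods of the centre of a node are the
unions of its children of index at least `M` and the right ones those of index at most `M`, so
avoiding a one-sided neighbourhood of each point of `D` is a one-sided bound on the next entry at
each node.
-/

open Set Filter Topology PiNat

section MonotoneSequences

theorem lt_of_strictMono_of_tendsto {α : Type*} [Preorder α] [TopologicalSpace α]
    [OrderClosedTopology α] {u : ℕ → α} {x : α} (hu : StrictMono u) (hx : Tendsto u atTop (𝓝 x))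
    (n : ℕ) : u n < x :=
  (hu n.lt_succ_self).trans_le (hu.monotone.ge_of_tendsto hx _)

theorem lt_of_strictAnti_of_tendsto {α : Type*} [Preorder α] [TopologicalSpace α]
    [OrderClosedTopology α] {v : ℕ → α} {x : α} (hv : StrictAnti v) (hx : Tendsto v atTop (𝓝 x))
    (n : ℕ) : x < v n :=
  (hv.antitone.le_of_tendsto hx _).trans_lt (hv n.lt_succ_self)

variable {α : Type*} [LinearOrder α] [TopologicalSpace α] [OrderTopology α]

theorem exists_strictMono_tendsto_of_zero_eq [DenselyOrdered α] [FirstCountableTopology α]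
    {s : Set α} (hs : Dense s) {a x : α} (ha : a ∈ s) (hax : a < x) :
    ∃ u : ℕ → α, u 0 = a ∧ StrictMono u ∧ (∀ n, u n ∈ s) ∧ Tendsto u atTop (𝓝 x) := by
  obtain ⟨w, hw, hws, hwx⟩ := hs.exists_seq_strictMono_tendsto_of_lt hax
  refine ⟨fun n => n.casesOn a w, rfl, strictMono_nat_of_lt_succ ?_, ?_,
    (tendsto_add_atTop_iff_nat 1).1 hwx⟩
  · rintro (_ | n)
    exacts [(hws 0).1.1, hw n.lt_succ_self]
  · rintro (_ | n)
    exacts [ha, (hws n).2]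

theorem exists_strictAnti_tendsto_of_zero_eq [DenselyOrdered α] [FirstCountableTopology α]
    {s : Set α} (hs : Dense s) {b x : α} (hb : b ∈ s) (hxb : x < b) :
    ∃ v : ℕ → α, v 0 = b ∧ StrictAnti v ∧ (∀ n, v n ∈ s) ∧ Tendsto v atTop (𝓝 x) :=
  exists_strictMono_tendsto_of_zero_eq (α := αᵒᵈ) hs hb hxb

variable {u v : ℕ → α} {x : α}

theorem hasBasis_nhdsLT_Ico (hu : StrictMono u) (hx : Tendsto u atTop (𝓝 x)) :
    (𝓝[<] x).HasBasis (fun _ => True) fun n => Ico (u n) x := by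
  have hux := lt_of_strictMono_of_tendsto hu hx
  refine (nhdsLT_basis_of_exists_lt ⟨u 0, hux 0⟩).to_hasBasis (fun y hy => ?_) fun n _ =>
    ⟨u n, hux n, Ioo_subset_Ico_self⟩
  obtain ⟨n, hn⟩ := (hx.eventually_const_lt hy).exists
  exact ⟨n, trivial, fun z hz => ⟨hn.trans_le hz.1, hz.2⟩⟩

theorem hasBasis_nhdsGT_Ioo (hv : StrictAnti v) (hx : Tendsto v atTop (𝓝 x)) :
    (𝓝[>] x).HasBasis (fun _ => True) fun n => Ioo x (v n) := by
  have hxv := lt_of_strictAnti_of_tendsto hv hx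
  refine (nhdsGT_basis_of_exists_gt ⟨v 0, hxv 0⟩).to_hasBasis (fun y hy => ?_) fun n _ =>
    ⟨v n, hxv n, Subset.rfl⟩
  obtain ⟨n, hn⟩ := (hx.eventually_lt_const hy).exists
  exact ⟨n, trivial, Ioo_subset_Ioo_right hn.le⟩

theorem biUnion_Ico_succ_eq_Ico (hu : StrictMono u) (hx : Tendsto u atTop (𝓝 x)) (m : ℕ) :
    ⋃ n ≥ m, Ico (u n) (u (n + 1)) = Ico (u m) x := by
  ext y
  simp only [mem_iUnion, exists_prop]
  constructor
  · rintro ⟨n, hmn, hn⟩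
    exact ⟨(hu.monotone hmn).trans hn.1, hn.2.trans (lt_of_strictMono_of_tendsto hu hx _)⟩
  · intro hy
    have hy0 : ¬ y < u 0 := ((hu.monotone m.zero_le).trans hy.1).not_gt
    obtain ⟨n, hn, hn'⟩ := Nat.exists_not_and_succ_of_not_zero_of_exists hy0
      (hx.eventually_const_lt hy.2).exists
    exact ⟨n, Nat.lt_succ_iff.1 (hu.lt_iff_lt.1 (hy.1.trans_lt hn')), not_lt.1 hn, hn'⟩

theorem biUnion_Ico_succ_eq_Ioo (hv : StrictAnti v) (hx : Tendsto v atTop (𝓝 x)) (m : ℕ) :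
    ⋃ n ≥ m, Ico (v (n + 1)) (v n) = Ioo x (v m) := by
  ext y
  simp only [mem_iUnion, exists_prop]
  constructor
  · rintro ⟨n, hmn, hn⟩
    exact ⟨(lt_of_strictAnti_of_tendsto hv hx _).trans_le hn.1, hn.2.trans_le (hv.antitone hmn)⟩
  · intro hy
    have hy0 : ¬ v 0 ≤ y := (hy.2.trans_le (hv.antitone m.zero_le)).not_ge
    obtain ⟨n, hn, hn'⟩ := Nat.exists_not_and_succ_of_not_zero_of_exists hy0
      ((hx.eventually_lt_const hy.1).mono fun _ => le_of_lt).exists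
    exact ⟨n, Nat.lt_succ_iff.1 (hv.lt_iff_gt.1 (hn'.trans_lt hy.2)), hn', not_le.1 hn⟩

end MonotoneSequences

section Sequences

theorem exists_forall_res {β : Type*} {P : List β → Prop} (hnil : P [])
    (hcons : ∀ l, P l → ∃ b, P (b :: l)) : ∃ f : ℕ → β, ∀ n, P (res f n) := by
  choose b hb using hcons
  let l (n : ℕ) : {l // P l} := n.rec ⟨[], hnil⟩ fun _ l => ⟨b l l.2 :: l.1, hb l l.2⟩
  have hres (n : ℕ) : res (fun n => b (l n).1 (l n).2) n = (l n).1 := by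
    induction n with
    | zero => rfl
    | succ n ih => rw [res_succ, ih]
  exact ⟨_, fun n => hres n ▸ (l n).2⟩

theorem res_eq_reverse_ofFn {β : Type*} (f : ℕ → β) (n : ℕ) :
    res f n = (List.ofFn fun i : Fin n => f i).reverse := by
  induction n with
  | zero => rfl
  | succ n ih => rw [res_succ, ih, List.ofFn_succ', List.concat_eq_append]; simp

theorem smallSet_iff_forall_list {X : Set (ℕ → ℤ)} :
    SmallSet X ↔ ∀ l : List ℤ,
      (∃ k, ∀ f ∈ X, res f l.length = l → f l.length < k) ∨
        ∃ k, ∀ f ∈ X, res f l.length = l → k < f l.length := by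
  have hres (f : ℕ → ℤ) {n : ℕ} (σ : Fin n → ℤ) :
      res f n = (List.ofFn σ).reverse ↔ ∀ i : Fin n, f i = σ i := by
    rw [res_eq_reverse_ofFn, List.reverse_inj, List.ofFn_inj, funext_iff]
  simp only [SmallSet, exists_or]
  constructor
  · intro h l
    obtain ⟨n, σ, rfl⟩ : ∃ n, ∃ σ : Fin n → ℤ, l = (List.ofFn σ).reverse :=
      ⟨_, l.reverse.get, by rw [List.ofFn_get, List.reverse_reverse]⟩
    simpa [hres] using h n σ
  · intro h n σ
    simpa [hres] using h (List.ofFn σ).reverse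

end Sequences

/-- A dense sequence `pt` of points of `α` avoiding both endpoints. In the application `α` is a
line with two endpoints adjoined and `pt` enumerates the chosen countable dense set; repetitions
are allowed. -/
structure InnerDenseSeq (α : Type*) [CompleteLinearOrder α] [TopologicalSpace α] where
  pt : ℕ → α
  denseRange_pt : DenseRange pt
  bot_notMem : ⊥ ∉ range pt
  top_notMem : ⊤ ∉ range pt

namespace InnerDenseSeq

variable {α : Type*} [CompleteLinearOrder α] [TopologicalSpace α]

theorem bot_lt_top (D : InnerDenseSeq α) : (⊥ : α) < ⊤ :=
  (bot_lt_iff_ne_bot.2 fun h => D.bot_notMem ⟨0, h⟩).trans_le (le_top (a := D.pt 0))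

theorem exists_pt_mem_Ioo [OrderClosedTopology α] [DenselyOrdered α] (D : InnerDenseSeq α)
    {x y : α} (hxy : x < y) : ∃ i, D.pt i ∈ Ioo x y := by
  simpa using! D.denseRange_pt.exists_between hxy

theorem dense_compl_range [OrderTopology α] [DenselyOrdered α] (D : InnerDenseSeq α) :
    Dense (range D.pt)ᶜ := by
  have : Nontrivial α := ⟨⊥, ⊤, D.bot_lt_top.ne⟩
  rw [← iUnion_singleton_eq_range, compl_iUnion]
  exact dense_iInter_of_isOpen (fun _ => isOpen_compl_singleton) fun _ => dense_compl_singleton _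

theorem firstCountableTopology [OrderTopology α] [DenselyOrdered α] (D : InnerDenseSeq α) :
    FirstCountableTopology α := by
  have : TopologicalSpace.SeparableSpace α := ⟨range D.pt, countable_range _, D.denseRange_pt⟩
  have := SecondCountableTopology.of_separableSpace_orderTopology α
  infer_instance

/-- A node of the tree of intervals: a nonempty half-open interval with endpoints outside the
dense sequence. -/
structure Cell (D : InnerDenseSeq α) where
  lo : α
  hi : α
  lo_lt_hi : lo < hi
  lo_notMem : lo ∉ range D.pt
  hi_notMem : hi ∉ range D.pt

namespace Cell

variable {D : InnerDenseSeq α}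

/-- The points of a cell. Keeping the left endpoint means that the children of a cell cover all of
it except its centre. -/
def toSet (S : D.Cell) : Set α := Ico S.lo S.hi

variable [OrderTopology α] [DenselyOrdered α]

theorem exists_pt_mem (S : D.Cell) : ∃ i, D.pt i ∈ S.toSet :=
  (D.exists_pt_mem_Ioo S.lo_lt_hi).imp fun _ h => Ioo_subset_Ico_self h

open Classical in
/-- The least index of a point of the dense sequence lying in the cell. -/
noncomputable def index (S : D.Cell) : ℕ := Nat.find S.exists_pt_mem

/-- The point at which a cell is split: the first point of the dense sequence lying in it. -/
noncomputable def center (S : D.Cell) : α := D.pt S.index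

theorem center_mem (S : D.Cell) : S.center ∈ S.toSet := by
  classical exact Nat.find_spec S.exists_pt_mem

theorem index_le {S : D.Cell} {i : ℕ} (hi : D.pt i ∈ S.toSet) : S.index ≤ i := by
  classical exact Nat.find_min' S.exists_pt_mem hi

theorem lo_lt_center (S : D.Cell) : S.lo < S.center :=
  S.center_mem.1.lt_of_ne fun h => S.lo_notMem ⟨S.index, h.symm⟩

theorem center_lt_hi (S : D.Cell) : S.center < S.hi := S.center_mem.2

/-- The division points of a cell: `low` climbs from the left endpoint to the centre, `high`
descends from the right endpoint to the centre. -/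
structure Ladder (S : D.Cell) where
  low : ℕ → α
  high : ℕ → α
  low_zero : low 0 = S.lo
  high_zero : high 0 = S.hi
  strictMono_low : StrictMono low
  strictAnti_high : StrictAnti high
  low_notMem : ∀ n, low n ∉ range D.pt
  high_notMem : ∀ n, high n ∉ range D.pt
  tendsto_low : Tendsto low atTop (𝓝 S.center)
  tendsto_high : Tendsto high atTop (𝓝 S.center)

theorem nonempty_ladder (S : D.Cell) : Nonempty S.Ladder := by
  have := D.firstCountableTopology
  obtain ⟨u, hu0, hu, huD, hux⟩ :=
    exists_strictMono_tendsto_of_zero_eq D.dense_compl_range S.lo_notMem S.lo_lt_center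
  obtain ⟨v, hv0, hv, hvD, hvx⟩ :=
    exists_strictAnti_tendsto_of_zero_eq D.dense_compl_range S.hi_notMem S.center_lt_hi
  exact ⟨⟨u, v, hu0, hv0, hu, hv, huD, hvD, hux, hvx⟩⟩

/-- A fixed choice of division points of a cell. -/
noncomputable def ladder (S : D.Cell) : S.Ladder := Classical.choice S.nonempty_ladder

/-- The `k`-th child of a cell. From left to right the children are numbered `0, 1, 2, …` up to the
centre and then `…, -3, -2, -1` from the centre to the right endpoint. -/
noncomputable def child (S : D.Cell) : ℤ → D.Cell
  | (n : ℕ) => ⟨S.ladder.low n, S.ladder.low (n + 1), S.ladder.strictMono_low n.lt_succ_self,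
      S.ladder.low_notMem _, S.ladder.low_notMem _⟩
  | .negSucc n => ⟨S.ladder.high (n + 1), S.ladder.high n, S.ladder.strictAnti_high n.lt_succ_self,
      S.ladder.high_notMem _, S.ladder.high_notMem _⟩

theorem biUnion_child_ge (S : D.Cell) (m : ℕ) :
    ⋃ k ≥ (m : ℤ), (S.child k).toSet = Ico (S.ladder.low m) S.center := by
  rw [← biUnion_Ico_succ_eq_Ico S.ladder.strictMono_low S.ladder.tendsto_low m]
  ext x
  simp only [mem_iUnion, exists_prop]
  constructor
  · rintro ⟨n | n, hmn, hx⟩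
    exacts [⟨n, Int.ofNat_le.1 hmn, hx⟩, by lia]
  · rintro ⟨n, hmn, hx⟩
    exact ⟨n, Int.ofNat_le.2 hmn, hx⟩

theorem biUnion_child_le (S : D.Cell) (m : ℕ) :
    ⋃ k ≤ Int.negSucc m, (S.child k).toSet = Ioo S.center (S.ladder.high m) := by
  rw [← biUnion_Ico_succ_eq_Ioo S.ladder.strictAnti_high S.ladder.tendsto_high m]
  ext x
  simp only [mem_iUnion, exists_prop]
  constructor
  · rintro ⟨n | n, hmn, hx⟩
    exacts [by lia, ⟨n, by lia, hx⟩]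
  · rintro ⟨n, hmn, hx⟩
    exact ⟨.negSucc n, by lia, hx⟩

theorem hasBasis_nhdsLT_center (S : D.Cell) :
    (𝓝[<] S.center).HasBasis (fun _ : ℤ => True) fun M => ⋃ k ≥ M, (S.child k).toSet := by
  refine (hasBasis_nhdsLT_Ico S.ladder.strictMono_low S.ladder.tendsto_low).to_hasBasis
    (fun m _ => ⟨m, trivial, (S.biUnion_child_ge m).subset⟩) fun M _ => ⟨M.toNat, trivial, ?_⟩
  rw [← biUnion_child_ge]
  exact biUnion_subset_biUnion_left fun k hk => M.self_le_toNat.trans hk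

theorem hasBasis_nhdsGT_center (S : D.Cell) :
    (𝓝[>] S.center).HasBasis (fun _ : ℤ => True) fun M => ⋃ k ≤ M, (S.child k).toSet := by
  refine (hasBasis_nhdsGT_Ioo S.ladder.strictAnti_high S.ladder.tendsto_high).to_hasBasis
    (fun m _ => ⟨.negSucc m, trivial, (S.biUnion_child_le m).subset⟩)
    fun M _ => ⟨(-M).toNat, trivial, ?_⟩
  have hM : Int.negSucc (-M).toNat ≤ M := by lia
  rw [← biUnion_child_le]
  exact biUnion_subset_biUnion_left fun k hk => le_trans hk hM

theorem biUnion_child_nonneg (S : D.Cell) :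
    ⋃ k ≥ (0 : ℤ), (S.child k).toSet = Ico S.lo S.center := by
  simpa only [S.ladder.low_zero, Nat.cast_zero] using S.biUnion_child_ge 0

theorem biUnion_child_neg (S : D.Cell) :
    ⋃ k ≤ (-1 : ℤ), (S.child k).toSet = Ioo S.center S.hi := by
  simpa only [S.ladder.high_zero] using! S.biUnion_child_le 0

theorem child_subset_Ico (S : D.Cell) {k : ℤ} (hk : 0 ≤ k) :
    (S.child k).toSet ⊆ Ico S.lo S.center :=
  S.biUnion_child_nonneg ▸ subset_biUnion_of_mem (u := fun k => (S.child k).toSet) hk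

theorem child_subset_Ioo (S : D.Cell) {k : ℤ} (hk : k ≤ -1) :
    (S.child k).toSet ⊆ Ioo S.center S.hi :=
  S.biUnion_child_neg ▸ subset_biUnion_of_mem (u := fun k => (S.child k).toSet) hk

theorem iUnion_child (S : D.Cell) : ⋃ k, (S.child k).toSet = S.toSet \ {S.center} := by
  have hsplit : ⋃ k, (S.child k).toSet =
      (⋃ k ≥ (0 : ℤ), (S.child k).toSet) ∪ ⋃ k ≤ (-1 : ℤ), (S.child k).toSet := by
    ext x
    simp only [mem_union, mem_iUnion, exists_prop, ← exists_or, ← or_and_right]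
    exact exists_congr fun k => (and_iff_right (by lia)).symm
  rw [hsplit, biUnion_child_nonneg, biUnion_child_neg, toSet]
  ext x
  have := S.lo_lt_center
  have := S.center_lt_hi
  grind

theorem child_subset (S : D.Cell) (k : ℤ) : (S.child k).toSet ⊆ S.toSet :=
  (subset_iUnion _ k).trans (S.iUnion_child.subset.trans sdiff_subset)

theorem center_notMem_child (S : D.Cell) (k : ℤ) : S.center ∉ (S.child k).toSet := fun h =>
  (S.iUnion_child.subset (mem_iUnion_of_mem k h)).2 rfl

theorem exists_mem_child {S : D.Cell} {x : α} (hx : x ∈ S.toSet) (hxc : x ≠ S.center) :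
    ∃ k, x ∈ (S.child k).toSet :=
  mem_iUnion.1 (S.iUnion_child.superset ⟨hx, hxc⟩)

theorem pairwise_disjoint_child (S : D.Cell) :
    Pairwise (Function.onFun Disjoint fun k => (S.child k).toSet) := by
  have hcross (m n : ℕ) : Disjoint (S.child m).toSet (S.child (.negSucc n)).toSet :=
    (Ico_disjoint_Ico_same.mono_right (Ioo_subset_Ico_self)).mono (S.child_subset_Ico (by lia))
      (S.child_subset_Ioo (by lia))
  rintro (m | m) (n | n) hmn
  · exact S.ladder.strictMono_low.monotone.pairwise_disjoint_on_Ico_succ (by grind)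
  · exact hcross m n
  · exact (hcross n m).symm
  · exact S.ladder.strictAnti_high.antitone.pairwise_disjoint_on_Ico_succ (by grind)

theorem lo_le_lo_child (S : D.Cell) (k : ℤ) : S.lo ≤ (S.child k).lo :=
  ((Ico_subset_Ico_iff (S.child k).lo_lt_hi).1 (S.child_subset k)).1

theorem hi_child_le_hi (S : D.Cell) (k : ℤ) : (S.child k).hi ≤ S.hi :=
  ((Ico_subset_Ico_iff (S.child k).lo_lt_hi).1 (S.child_subset k)).2

theorem lo_child_zero (S : D.Cell) : (S.child 0).lo = S.lo := S.ladder.low_zero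

theorem hi_child_neg_one (S : D.Cell) : (S.child (-1)).hi = S.hi := S.ladder.high_zero

theorem lo_lt_lo_child (S : D.Cell) {k : ℤ} (hk : k ≠ 0) : S.lo < (S.child k).lo := by
  rcases k with n | n
  · rw [← S.ladder.low_zero]
    exact S.ladder.strictMono_low (by lia)
  · exact S.lo_lt_center.trans
      (lt_of_strictAnti_of_tendsto S.ladder.strictAnti_high S.ladder.tendsto_high _)

theorem hi_child_lt_hi (S : D.Cell) {k : ℤ} (hk : k ≠ -1) : (S.child k).hi < S.hi := by
  rcases k with n | n
  · exact (lt_of_strictMono_of_tendsto S.ladder.strictMono_low S.ladder.tendsto_low _).trans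
      S.center_lt_hi
  · rw [← S.ladder.high_zero]
    exact S.ladder.strictAnti_high (by lia)

end Cell

variable [OrderTopology α] [DenselyOrdered α] (D : InnerDenseSeq α)

/-- The tree of cells, indexed by finite sequences of integers. As for `PiNat.res`, the head of the
list is the last entry of the sequence. -/
noncomputable def cell : List ℤ → D.Cell
  | [] => ⟨⊥, ⊤, D.bot_lt_top, D.bot_notMem, D.top_notMem⟩
  | k :: l => (cell l).child k

variable {D}

theorem length_le_of_pt_mem_cell {i : ℕ} {l : List ℤ} (hi : D.pt i ∈ (D.cell l).toSet) :
    l.length ≤ i := by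
  induction l generalizing i with
  | nil => exact i.zero_le
  | cons k l ih =>
    have hle : (D.cell l).index ≤ i := Cell.index_le (Cell.child_subset _ k hi)
    have hne : (D.cell l).index ≠ i := by
      rintro rfl
      exact (D.cell l).center_notMem_child k hi
    exact (ih (D.cell l).center_mem).trans_lt (hle.lt_of_ne hne)

theorem eq_of_mem_cell {x : α} {l l' : List ℤ} (hlen : l.length = l'.length)
    (hx : x ∈ (D.cell l).toSet) (hx' : x ∈ (D.cell l').toSet) : l = l' := by
  induction l generalizing l' with
  | nil => exact (List.length_eq_zero_iff.1 hlen.symm).symm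
  | cons k l ih =>
    obtain _ | ⟨k', l'⟩ := l'
    · exact absurd hlen (by simp)
    obtain rfl : l = l' :=
      ih (by simpa using hlen) (Cell.child_subset _ _ hx) (Cell.child_subset _ _ hx')
    have : k = k' := (D.cell l).pairwise_disjoint_child.eq (not_disjoint_iff.2 ⟨x, hx, hx'⟩)
    rw [this]

theorem exists_center_eq_or_forall_mem_cell {x : α} (hx : x ≠ ⊤) :
    (∃ l, (D.cell l).center = x) ∨ ∃ f, ∀ n, x ∈ (D.cell (res f n)).toSet := by
  refine or_iff_not_imp_left.2 fun hcenter => exists_forall_res ⟨bot_le, hx.lt_top⟩ fun l hl =>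
    Cell.exists_mem_child hl fun h => hcenter ⟨l, h.symm⟩

theorem exists_center_eq_pt (i : ℕ) : ∃ l, (D.cell l).center = D.pt i := by
  refine (exists_center_eq_or_forall_mem_cell fun h => D.top_notMem ⟨i, h⟩).resolve_right ?_
  rintro ⟨f, hf⟩
  simpa using length_le_of_pt_mem_cell (hf (i + 1))

section Branch

variable {f : ℕ → ℤ} {x y : α}

theorem notMem_range_of_forall_mem_cell (hx : ∀ n, x ∈ (D.cell (res f n)).toSet) :
    x ∉ range D.pt := by
  rintro ⟨i, rfl⟩
  simpa using length_le_of_pt_mem_cell (hx (i + 1))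

theorem eq_of_forall_mem_cell (hx : ∀ n, x ∈ (D.cell (res f n)).toSet)
    (hy : ∀ n, y ∈ (D.cell (res f n)).toSet) : x = y := by
  wlog hxy : x < y
  · by_contra hne
    exact hne (this hy hx ((not_lt.1 hxy).lt_of_ne' hne)).symm
  obtain ⟨i, hi⟩ := D.exists_pt_mem_Ioo hxy
  exact absurd ⟨i, rfl⟩ (notMem_range_of_forall_mem_cell fun n =>
    ⟨(hx n).1.trans hi.1.le, hi.2.trans (hy n).2⟩)

end Branch

theorem monotone_lo_cell_res (f : ℕ → ℤ) : Monotone fun n => (D.cell (res f n)).lo :=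
  monotone_nat_of_le_succ fun n => (D.cell (res f n)).lo_le_lo_child _

theorem antitone_hi_cell_res (f : ℕ → ℤ) : Antitone fun n => (D.cell (res f n)).hi :=
  antitone_nat_of_succ_le fun n => (D.cell (res f n)).hi_child_le_hi _

variable (D) in
/-- The point determined by a branch of the tree of cells: the supremum of the left endpoints along
the branch. It lies in all the cells of the branch unless the branch is eventually `-1`. -/
noncomputable def branchPoint (f : ℕ → ℤ) : α := ⨆ n, (D.cell (res f n)).lo

theorem lo_le_branchPoint (f : ℕ → ℤ) (n : ℕ) : (D.cell (res f n)).lo ≤ D.branchPoint f :=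
  le_iSup (fun n => (D.cell (res f n)).lo) n

theorem branchPoint_le_hi (f : ℕ → ℤ) (n : ℕ) : D.branchPoint f ≤ (D.cell (res f n)).hi :=
  iSup_le fun m => ((monotone_lo_cell_res f (le_max_left m n)).trans
    (D.cell (res f (max m n))).lo_lt_hi.le).trans (antitone_hi_cell_res f (le_max_right m n))

theorem branchPoint_mem_cell {f : ℕ → ℤ} (hf : ¬ EventuallyNegOne f) (n : ℕ) :
    D.branchPoint f ∈ (D.cell (res f n)).toSet := by
  obtain ⟨m, hnm, hm⟩ : ∃ m ≥ n, f m ≠ -1 := by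
    simpa only [EventuallyNegOne, not_exists, not_forall, exists_prop] using
      not_exists.1 hf n
  exact ⟨lo_le_branchPoint f n, (branchPoint_le_hi f (m + 1)).trans_lt <|
    ((D.cell (res f m)).hi_child_lt_hi hm).trans_le (antitone_hi_cell_res f hnm)⟩

theorem not_eventuallyNegOne_of_forall_mem_cell {f : ℕ → ℤ} {x : α}
    (hx : ∀ n, x ∈ (D.cell (res f n)).toSet) : ¬ EventuallyNegOne f := by
  rintro ⟨N, hN⟩
  have hconst : ∀ n ≥ N, (D.cell (res f n)).hi = (D.cell (res f N)).hi := by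
    intro n hn
    induction n, hn using Nat.le_induction with
    | base => rfl
    | succ n hn ih => rw [← ih, res_succ, hN n hn, cell, Cell.hi_child_neg_one]
  obtain ⟨i, hi⟩ := D.exists_pt_mem_Ioo (hx N).2
  refine notMem_range_of_forall_mem_cell (fun n => ⟨(hx n).1.trans hi.1.le, hi.2.trans_le ?_⟩)
    ⟨i, rfl⟩
  rw [← hconst (max n N) (le_max_right n N)]
  exact antitone_hi_cell_res f (le_max_left n N)

theorem branchPoint_eq_bot_iff {f : ℕ → ℤ} : D.branchPoint f = ⊥ ↔ f = fun _ => 0 := by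
  rw [branchPoint, iSup_eq_bot]
  constructor
  · intro h
    funext n
    by_contra hn
    exact (((D.cell (res f n)).lo_lt_lo_child hn).trans_le (h (n + 1)).le).not_ge bot_le
  · rintro rfl n
    induction n with
    | zero => rfl
    | succ n ih => rw [res_succ, cell, Cell.lo_child_zero, ih]

theorem bijOn_branchPoint :
    BijOn D.branchPoint {f | ¬ EventuallyNegOne f} ((range D.pt)ᶜ \ {⊤}) := by
  refine ⟨fun f hf => ?_, fun f hf g hg hfg => ?_, fun x hx => ?_⟩
  · have hmem := branchPoint_mem_cell (D := D) hf
    exact ⟨notMem_range_of_forall_mem_cell hmem, (hmem 0).2.ne⟩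
  · refine res_injective (funext fun n => ?_)
    have hgf : D.branchPoint f ∈ (D.cell (res g n)).toSet := hfg ▸ branchPoint_mem_cell hg n
    exact eq_of_mem_cell (by simp) (branchPoint_mem_cell hf n) hgf
  · have hcenter : ¬ ∃ l, (D.cell l).center = x := fun ⟨l, hl⟩ => hx.1 ⟨_, hl⟩
    obtain ⟨f, hf⟩ := (exists_center_eq_or_forall_mem_cell hx.2).resolve_left hcenter
    have hf' := not_eventuallyNegOne_of_forall_mem_cell hf
    exact ⟨f, hf', eq_of_forall_mem_cell (branchPoint_mem_cell hf') hf⟩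

theorem bijOn_branchPoint_compl_exceptionalSet :
    BijOn D.branchPoint ExceptionalSetᶜ ((range D.pt)ᶜ ∩ Ioo ⊥ ⊤) := by
  have hdom : ExceptionalSetᶜ = {f | ¬ EventuallyNegOne f} ∩ D.branchPoint ⁻¹' {⊥}ᶜ := by
    ext f
    simp [ExceptionalSet, branchPoint_eq_bot_iff, and_comm]
  have hcod : (range D.pt)ᶜ ∩ Ioo ⊥ ⊤ = ((range D.pt)ᶜ \ {⊤}) ∩ {⊥}ᶜ := by
    ext x
    simp only [mem_inter_iff, Set.mem_sdiff, mem_Ioo, bot_lt_iff_ne_bot, lt_top_iff_ne_top,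
      mem_compl_iff, mem_singleton_iff]
    tauto
  rw [hdom, hcod]
  exact bijOn_branchPoint.inter_mapsTo (fun _ h => h) fun _ h => h.2

theorem biUnion_child_subset_compl_iff {A : Set α} (hA : A ⊆ (range D.pt)ᶜ ∩ Ioo ⊥ ⊤) {l : List ℤ}
    {p : ℤ → Prop} : (⋃ k, ⋃ (_ : p k), ((D.cell l).child k).toSet) ⊆ Aᶜ ↔
      ∀ f ∈ ExceptionalSetᶜ ∩ D.branchPoint ⁻¹' A, res f l.length = l → ¬ p (f l.length) := by
  simp only [iUnion_subset_iff]
  constructor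
  · rintro h f ⟨hf, hfA⟩ hl hp
    have hmem := branchPoint_mem_cell (D := D) (fun h => hf (.inl h)) (l.length + 1)
    rw [res_succ, hl] at hmem
    exact h _ hp hmem hfA
  · intro h k hk x hx hxA
    obtain ⟨f, hf, rfl⟩ := bijOn_branchPoint_compl_exceptionalSet.surjOn (hA hxA)
    have hres : res f (l.length + 1) = k :: l :=
      eq_of_mem_cell (by simp) (branchPoint_mem_cell (fun h => hf (.inl h)) _) hx
    obtain ⟨rfl, hl⟩ := List.cons_eq_cons.1 hres
    exact h f ⟨hf, hxA⟩ hl hk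

theorem smallSet_preimage_branchPoint_iff {A : Set α} (hA : A ⊆ (range D.pt)ᶜ ∩ Ioo ⊥ ⊤) :
    SmallSet (ExceptionalSetᶜ ∩ D.branchPoint ⁻¹' A) ↔
      ∀ x ∈ range D.pt, Aᶜ ∈ 𝓝[<] x ∨ Aᶜ ∈ 𝓝[>] x := by
  have hcenter : range (fun l => (D.cell l).center) = range D.pt :=
    (range_subset_iff.2 fun l => mem_range_self (D.cell l).index).antisymm
      (range_subset_iff.2 exists_center_eq_pt)
  rw [← hcenter, forall_mem_range, smallSet_iff_forall_list]
  refine forall_congr' fun l => or_congr ?_ ?_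
  · simp only [(Cell.hasBasis_nhdsLT_center _).mem_iff, true_and,
      biUnion_child_subset_compl_iff hA, ge_iff_le, not_le]
  · simp only [(Cell.hasBasis_nhdsGT_center _).mem_iff, true_and,
      biUnion_child_subset_compl_iff hA, not_le]

end InnerDenseSeq

section Embedding

theorem exists_bijOn_of_bijOn_image {α β γ : Type*} [Nonempty β] {e : β → α}
    (he : Function.Injective e) {g : γ → α} {s : Set γ} {t : Set β} (hg : BijOn g s (e '' t)) :
    ∃ F : γ → β, BijOn F s t ∧ EqOn (e ∘ F) g s := by
  have heq : EqOn (e ∘ Function.invFun e ∘ g) g s := fun x hx =>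
    Function.invFun_eq ((hg.mapsTo hx).imp fun _ h => h.2)
  refine ⟨Function.invFun e ∘ g, ⟨fun x hx => ?_, ?_, fun y hy => ?_⟩, heq⟩
  · exact he.mem_set_image.1 (Eq.subst (heq hx).symm (hg.mapsTo hx))
  · exact (hg.injOn.congr heq.symm).of_comp
  · obtain ⟨x, hx, hxy⟩ := hg.surjOn (mem_image_of_mem e hy)
    exact ⟨x, hx, he ((heq hx).trans hxy)⟩

theorem range_withBot_withTop_coe {β : Type*} [Preorder β] :
    range (fun x : β => ((x : WithTop β) : WithBot (WithTop β))) = Ioo ⊥ ⊤ := by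
  rw [range_comp' WithBot.some, WithTop.range_coe, WithBot.image_coe_Iio, WithBot.coe_top]

theorem compl_image_mem_nhdsLT_iff {α β : Type*} [LinearOrder α] [TopologicalSpace α]
    [LinearOrder β] [TopologicalSpace β] {e : β → α} (he : StrictMono e)
    (hopen : IsOpenEmbedding e) {A : Set β} {x : β} :
    (e '' A)ᶜ ∈ 𝓝[<] (e x) ↔ Aᶜ ∈ 𝓝[<] x := by
  rw [← hopen.map_nhdsWithin_preimage_eq, mem_map, preimage_compl,
    preimage_image_eq A he.injective]
  congr! 2
  ext y
  exact he.lt_iff_lt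

theorem compl_image_mem_nhdsGT_iff {α β : Type*} [LinearOrder α] [TopologicalSpace α]
    [LinearOrder β] [TopologicalSpace β] {e : β → α} (he : StrictMono e)
    (hopen : IsOpenEmbedding e) {A : Set β} {x : β} :
    (e '' A)ᶜ ∈ 𝓝[>] (e x) ↔ Aᶜ ∈ 𝓝[>] x :=
  compl_image_mem_nhdsLT_iff (α := αᵒᵈ) (β := βᵒᵈ) he.dual hopen

variable {α β : Type*} [TopologicalSpace α] [LinearOrder β] [TopologicalSpace β]
  [OrderTopology β] {e : β → α}

theorem isOpenEmbedding_of_strictMono_of_range_eq_Ioo [LinearOrder α] [OrderTopology α]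
    {a b : α} (he : StrictMono e) (hrange : range e = Ioo a b) : IsOpenEmbedding e :=
  ⟨he.isEmbedding_of_ordConnected (hrange ▸ ordConnected_Ioo), hrange ▸ isOpen_Ioo⟩

theorem InnerDenseSeq.exists_range_pt_eq_image [CompleteLinearOrder α] [DenselyOrdered α]
    [OrderTopology α] [Nonempty β] (he : StrictMono e) (hrange : range e = Ioo ⊥ ⊤) {D : Set β}
    (hDc : D.Countable) (hD : Dense D) : ∃ S : InnerDenseSeq α, range S.pt = e '' D := by
  obtain ⟨d, rfl⟩ := hDc.exists_eq_range hD.nonempty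
  have hmem (x : β) : e x ∈ Ioo ⊥ ⊤ := hrange ▸ mem_range_self x
  have hdense : DenseRange e := by
    obtain ⟨x⟩ := ‹Nonempty β›
    have : Nontrivial α := ⟨⊥, e x, (hmem x).1.ne⟩
    rw [DenseRange, hrange, dense_iff_closure_eq, closure_Ioo bot_ne_top, Icc_bot_top]
  have hcont := (isOpenEmbedding_of_strictMono_of_range_eq_Ioo he hrange).continuous
  refine ⟨⟨e ∘ d, hdense.comp hD hcont, ?_, ?_⟩, range_comp e d⟩
  · rintro ⟨i, hi⟩
    exact (hmem (d i)).1.ne' hi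
  · rintro ⟨i, hi⟩
    exact (hmem (d i)).2.ne hi

end Embedding

theorem stmt0_general {β : Type*} [ConditionallyCompleteLinearOrder β] [DenselyOrdered β]
    [NoMinOrder β] [NoMaxOrder β] [Nonempty β] [TopologicalSpace β] [OrderTopology β] {D : Set β}
    (hDc : D.Countable) (hD : Dense D) :
    ∃ F : (ℕ → ℤ) → β,
      BijOn F ExceptionalSetᶜ Dᶜ ∧
      ∀ A ⊆ Dᶜ, (∀ d ∈ D, Aᶜ ∈ 𝓝[<] d ∨ Aᶜ ∈ 𝓝[>] d) ↔
        SmallSet (ExceptionalSetᶜ ∩ F ⁻¹' A) := by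
  let : TopologicalSpace (WithBot (WithTop β)) := Preorder.topology _
  have : OrderTopology (WithBot (WithTop β)) := ⟨rfl⟩
  let e (x : β) : WithBot (WithTop β) := ((x : WithTop β) : WithBot (WithTop β))
  have he : StrictMono e := WithBot.coe_strictMono.comp WithTop.coe_strictMono
  have hrange : range e = Ioo ⊥ ⊤ := range_withBot_withTop_coe
  have hopen := isOpenEmbedding_of_strictMono_of_range_eq_Ioo he hrange
  obtain ⟨S, hS⟩ := InnerDenseSeq.exists_range_pt_eq_image he hrange hDc hD
  have himage : (range S.pt)ᶜ ∩ Ioo ⊥ ⊤ = e '' Dᶜ := by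
    rw [hS, ← hrange, image_compl_eq_range_sdiff_image he.injective, inter_comm, sdiff_eq]
  obtain ⟨F, hF, heF⟩ := exists_bijOn_of_bijOn_image he.injective
    (himage ▸ S.bijOn_branchPoint_compl_exceptionalSet)
  refine ⟨F, hF, fun A hA => ?_⟩
  have hpre : ExceptionalSetᶜ ∩ F ⁻¹' A = ExceptionalSetᶜ ∩ S.branchPoint ⁻¹' (e '' A) := by
    rw [← heF.inter_preimage_eq, preimage_comp, preimage_image_eq A he.injective]
  rw [hpre, S.smallSet_preimage_branchPoint_iff (himage ▸ image_mono hA), hS, forall_mem_image]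
  simp only [compl_image_mem_nhdsLT_iff he hopen, compl_image_mem_nhdsGT_iff he hopen]

section Rationals

variable {𝕜 : Type*} [Field 𝕜] [LinearOrder 𝕜] [IsStrictOrderedRing 𝕜] [Archimedean 𝕜]
  [TopologicalSpace 𝕜] [OrderTopology 𝕜]

theorem hasBasis_nhdsGT_add_one_div_intCast (x : 𝕜) :
    (𝓝[>] x).HasBasis (fun k : ℤ => 0 < k) fun k => Ioo x (x + 1 / k) := by
  refine (nhdsGT_basis x).to_hasBasis (fun y hy => ?_) fun k hk =>
    ⟨x + 1 / k, by simpa using hk, Subset.rfl⟩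
  obtain ⟨n, hn⟩ := exists_nat_one_div_lt (sub_pos.2 hy)
  refine ⟨n + 1, by lia, Ioo_subset_Ioo_right ?_⟩
  push_cast
  exact (lt_sub_iff_add_lt'.1 hn).le

theorem hasBasis_nhdsLT_add_one_div_intCast (x : 𝕜) :
    (𝓝[<] x).HasBasis (fun k : ℤ => k < 0) fun k => Ioo (x + 1 / k) x := by
  refine (nhdsLT_basis x).to_hasBasis (fun y hy => ?_) fun k hk =>
    ⟨x + 1 / k, by simpa using hk, Subset.rfl⟩
  obtain ⟨n, hn⟩ := exists_nat_one_div_lt (sub_pos.2 hy)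
  refine ⟨-(n + 1), by lia, Ioo_subset_Ioo_left ?_⟩
  push_cast
  rw [one_div_neg_eq_neg_one_div, ← sub_eq_add_neg]
  exact (lt_sub_comm.1 hn).le

theorem qNowhereDense_iff_compl_mem_nhdsLT_or_nhdsGT {A : Set ℝ} :
    QNowhereDense A ↔ ∀ q ∈ range ((↑) : ℚ → ℝ), Aᶜ ∈ 𝓝[<] q ∨ Aᶜ ∈ 𝓝[>] q := by
  rw [forall_mem_range]
  refine forall_congr' fun q => ?_
  simp only [(hasBasis_nhdsLT_add_one_div_intCast _).mem_iff,
    (hasBasis_nhdsGT_add_one_div_intCast _).mem_iff, subset_compl_comm (t := A), ← exists_or,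
    ne_iff_lt_or_gt]
  refine exists_congr fun k => ?_
  rcases lt_trichotomy k 0 with hk | rfl | hk
  · have hlt : (q : ℝ) + 1 / k < q := by simpa using hk
    simp only [hk, hk.not_gt, min_eq_right hlt.le, max_eq_left hlt.le, or_false, true_and,
      false_and]
    rfl
  · simp
  · have hlt : (q : ℝ) < q + 1 / k := by simpa using hk
    simp only [hk, hk.not_gt, min_eq_left hlt.le, max_eq_right hlt.le, false_or, true_and,
      false_and]
    rfl

end Rationals

theorem stmt0 :
    ∃ F : (ℕ → ℤ) → ℝ,
      Set.BijOn F (ExceptionalSet)ᶜ {x : ℝ | Irrational x} ∧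
      ∀ A ⊆ {x : ℝ | Irrational x},
        QNowhereDense A ↔ SmallSet ((ExceptionalSet)ᶜ ∩ F ⁻¹' A) := by
  simp only [qNowhereDense_iff_compl_mem_nhdsLT_or_nhdsGT]
  exact stmt0_general (countable_range _) Rat.denseRange_cast
end

section
/- The least cardinal κ such that ℝ is the union of a family of κ many ℚ-very meagre sets is equal to the least cardinal κ such that ℤ^ω is the union of a family of κ many small sets. -/
open Cardinal

/-- `X ⊆ ℝ` is `ℚ`-very meagre: a countable union of `ℚ`-nowhere dense sets. -/
def QVeryMeagre (X : Set ℝ) : Prop :=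
  ∃ g : ℕ → Set ℝ, (∀ n, QNowhereDense (g n)) ∧ X = ⋃ n, g n

/-!
A set `X ⊆ ℝ` is `ℚ`-nowhere dense iff it avoids some `(q, q + ε)` or some `(q - ε, q)` for every
rational `q`, and `X ⊆ ℤ^ω` is small iff, among the sequences that extend a given finite one, it
avoids all large or all very negative values of the next coordinate. Hence a map pulls sets of one
kind back to sets of the other as soon as it carries the two sides of each rational to the two ends
of a node of the tree of finite sequences, or conversely.

* With `e` enumerating `ℚ`, send `x` to `n ↦ ⌊√2 / (x - e n)⌋`. The `n`-th coordinate runs off to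
  `±∞` on the two sides of `e n`, while the earlier ones are constant near `e n`.
* Send `f` to a series of rational terms in which the `n`-th term has the sign of `f n`, depends
  only on `f 0, …, f n`, dominates the sum of all later terms, and tends to `0` as `f n → ±∞`
  with `f 0, …, f (n - 1)` fixed.

Passing to countable unions does not change the covering number, because it is uncountable by the
Baire category theorem.
-/

open Filter Set Topology

universe u

section CoveringNumber

variable {α β : Type u} {P : Set α → Prop} {Q : Set β → Prop}

/-- The covering number of a class `P` of subsets of `α`: the least cardinality of a family of
members of `P` with union `α`. It is `0` when there is no such family. -/
noncomputable def coveringNumber (P : Set α → Prop) : Cardinal.{u} :=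
  sInf {c : Cardinal | ∃ S : Set (Set α), (∀ A ∈ S, P A) ∧ ⋃₀ S = Set.univ ∧ #S = c}

/-- The class of countable unions of members of `P`; for `P = QNowhereDense` this is
`QVeryMeagre` by definition. -/
def IsCountableUnionOf (P : Set α → Prop) (X : Set α) : Prop :=
  ∃ g : ℕ → Set α, (∀ n, P (g n)) ∧ X = ⋃ n, g n

lemma coveringNumber_le_mk {ι : Type u} {A : ι → Set α} (hA : ∀ i, P (A i))
    (hU : ⋃ i, A i = Set.univ) : coveringNumber P ≤ #ι :=
  calc coveringNumber P ≤ #(range A) :=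
        csInf_le' ⟨range A, forall_mem_range.2 hA, by rw [sUnion_range, hU], rfl⟩
    _ ≤ #ι := Cardinal.mk_range_le

lemma exists_cover_of_forall_exists_mem (hP : ∀ a, ∃ A, P A ∧ a ∈ A) :
    ∃ S : Set (Set α), (∀ A ∈ S, P A) ∧ ⋃₀ S = Set.univ ∧ #S = coveringNumber P :=
  csInf_mem (s := {c | ∃ S : Set (Set α), (∀ A ∈ S, P A) ∧ ⋃₀ S = Set.univ ∧ #S = c})
    ⟨_, {A | P A}, fun _ hA => hA, sUnion_eq_univ_iff.2 hP, rfl⟩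

lemma coveringNumber_le_of_preimage (φ : α → β) (hφ : ∀ B, Q B → P (φ ⁻¹' B))
    (hQ : ∀ b, ∃ B, Q B ∧ b ∈ B) : coveringNumber P ≤ coveringNumber Q := by
  obtain ⟨S, hS, hU, hcard⟩ := exists_cover_of_forall_exists_mem hQ
  rw [← hcard]
  refine coveringNumber_le_mk (A := fun B : S => φ ⁻¹' B) (fun B => hφ B (hS B B.2)) ?_
  rw [← preimage_iUnion, ← sUnion_eq_iUnion, hU, preimage_univ]

lemma aleph0_lt_coveringNumber_of_isMeagre [TopologicalSpace α] [BaireSpace α] [Nonempty α]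
    (hP : ∀ A, P A → IsMeagre A) (hcover : ∀ a, ∃ A, P A ∧ a ∈ A) : ℵ₀ < coveringNumber P := by
  obtain ⟨S, hS, hU, hcard⟩ := exists_cover_of_forall_exists_mem hcover
  rw [← hcard, ← not_le, Cardinal.mk_le_aleph0_iff]
  intro hcountable
  refine not_isMeagre_of_isOpen isOpen_univ (univ_nonempty (α := α)) ?_
  rw [← hU, sUnion_eq_iUnion]
  exact isMeagre_iUnion fun A : S => hP A (hS A A.2)

lemma coveringNumber_isCountableUnionOf (hP : ∀ a, ∃ A, P A ∧ a ∈ A)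
    (h : ℵ₀ < coveringNumber P) : coveringNumber (IsCountableUnionOf P) = coveringNumber P := by
  have subclass : ∀ A, P A → IsCountableUnionOf P A := fun A hA =>
    ⟨fun _ => A, fun _ => hA, (iUnion_const A).symm⟩
  refine le_antisymm (coveringNumber_le_of_preimage id subclass hP) ?_
  obtain ⟨S, hS, hU, hcard⟩ := exists_cover_of_forall_exists_mem fun a =>
    (hP a).imp fun A hA => ⟨subclass A hA.1, hA.2⟩
  choose g hg hgU using hS
  have le_max_mk : coveringNumber P ≤ max #S ℵ₀ :=
    calc coveringNumber P ≤ #(S × ULift.{u} ℕ) := by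
          refine coveringNumber_le_mk (A := fun p => g p.1 p.1.2 p.2.down)
            (fun p => hg _ _ _) (eq_univ_of_forall fun a => ?_)
          obtain ⟨A, hA, ha⟩ := hU.superset (mem_univ a)
          rw [hgU A hA, mem_iUnion] at ha
          obtain ⟨n, hn⟩ := ha
          exact mem_iUnion.2 ⟨(⟨A, hA⟩, ⟨n⟩), hn⟩
      _ = #S * ℵ₀ := by simp
      _ ≤ max #S ℵ₀ := Cardinal.mul_le_max_of_aleph0_le_right le_rfl
  rw [← hcard]
  exact (le_max_iff.1 le_max_mk).resolve_right h.not_ge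

end CoveringNumber

section OneSidedNeighborhoods

variable {K : Type*} [Field K] [LinearOrder K] [IsStrictOrderedRing K] [Archimedean K]
  [TopologicalSpace K] [OrderTopology K]

lemma mem_nhdsGT_iff_exists_int {a : K} {s : Set K} :
    s ∈ 𝓝[>] a ↔ ∃ k : ℤ, 0 < k ∧ Ioo a (a + 1 / k) ⊆ s := by
  rw [mem_nhdsGT_iff_exists_Ioo_subset]
  constructor
  · rintro ⟨b, hab, hs⟩
    obtain ⟨n, hn⟩ := exists_nat_one_div_lt (sub_pos.2 (mem_Ioi.1 hab))
    refine ⟨n + 1, by positivity, (Ioo_subset_Ioo_right ?_).trans hs⟩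
    push_cast
    linarith
  · rintro ⟨k, hk, hs⟩
    exact ⟨a + 1 / k, lt_add_of_pos_right a (by positivity), hs⟩

lemma mem_nhdsLT_iff_exists_int {a : K} {s : Set K} :
    s ∈ 𝓝[<] a ↔ ∃ k : ℤ, k < 0 ∧ Ioo (a + 1 / k) a ⊆ s := by
  rw [mem_nhdsLT_iff_exists_Ioo_subset]
  constructor
  · rintro ⟨b, hba, hs⟩
    obtain ⟨n, hn⟩ := exists_nat_one_div_lt (sub_pos.2 (mem_Iio.1 hba))
    refine ⟨-(n + 1), by omega, (Ioo_subset_Ioo_left ?_).trans hs⟩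
    push_cast
    rw [one_div_neg_eq_neg_one_div]
    linarith
  · rintro ⟨k, hk, hs⟩
    exact ⟨a + 1 / k, add_lt_of_neg_right a (one_div_neg.2 (Int.cast_lt_zero.2 hk)), hs⟩

variable {X : Set ℝ}

lemma qNowhereDense_iff_uIoo :
    QNowhereDense X ↔ ∀ q : ℚ, ∃ k : ℤ, k ≠ 0 ∧ uIoo (q : ℝ) (q + 1 / k) ⊆ Xᶜ := by
  simp only [subset_compl_comm (t := X)]
  rfl

lemma qNowhereDense_iff : QNowhereDense X ↔ ∀ q : ℚ, Xᶜ ∈ 𝓝[>] (q : ℝ) ∨ Xᶜ ∈ 𝓝[<] (q : ℝ) := by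
  rw [qNowhereDense_iff_uIoo]
  refine forall_congr' fun q => ?_
  rw [mem_nhdsGT_iff_exists_int, mem_nhdsLT_iff_exists_int, ← exists_or]
  refine exists_congr fun k => ?_
  rw [ne_comm, ne_iff_lt_or_gt, or_and_right]
  refine or_congr (and_congr_right fun hk => ?_) (and_congr_right fun hk => ?_)
  · rw [uIoo_of_lt (lt_add_of_pos_right _ (by positivity))]
  · rw [uIoo_of_gt (add_lt_of_neg_right _ (one_div_neg.2 (Int.cast_lt_zero.2 hk)))]

lemma QNowhereDense.isNowhereDense (hX : QNowhereDense X) : IsNowhereDense X := by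
  rw [IsNowhereDense, interior_eq_empty_iff_dense_compl, ← interior_compl]
  refine Dense.of_closure (Rat.denseRange_cast.mono (range_subset_iff.2 fun q => ?_))
  obtain ⟨k, hk, hsub⟩ := qNowhereDense_iff_uIoo.1 hX q
  have hne : (q : ℝ) ≠ q + 1 / k := by simpa using hk
  refine closure_mono (isOpen_Ioo.subset_interior_iff.2 hsub) ?_
  rw [closure_Ioo (inf_lt_sup.2 hne).ne]
  exact left_mem_uIcc

end OneSidedNeighborhoods

section NodeFilter

variable {ι : Type*}

/-- The filter of sequences that agree with `g` below `n` and whose `n`-th term goes to `l`. For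
`l = atTop` and `l = atBot` these are the two ends of the node `(g 0, …, g (n - 1))` of the tree
of finite sequences in `ι`. -/
def nodeFilter (g : ℕ → ι) (n : ℕ) (l : Filter ι) : Filter (ℕ → ι) :=
  comap (fun f => f n) l ⊓ 𝓟 (PiNat.cylinder g n)

lemma tendsto_nodeFilter {γ : Type*} {a : Filter γ} {F : γ → ℕ → ι} {g : ℕ → ι} {n : ℕ}
    {l : Filter ι} :
    Tendsto F a (nodeFilter g n l) ↔
      Tendsto (fun x => F x n) a l ∧ ∀ᶠ x in a, F x ∈ PiNat.cylinder g n := by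
  rw [nodeFilter, tendsto_inf, tendsto_comap_iff, tendsto_principal]
  rfl

lemma tendsto_apply_nodeFilter (g : ℕ → ι) (n : ℕ) (l : Filter ι) :
    Tendsto (fun f => f n) (nodeFilter g n l) l :=
  (tendsto_nodeFilter.1 tendsto_id).1

lemma eventually_mem_cylinder_nodeFilter (g : ℕ → ι) (n : ℕ) (l : Filter ι) :
    ∀ᶠ f in nodeFilter g n l, f ∈ PiNat.cylinder g n :=
  (tendsto_nodeFilter.1 tendsto_id).2

lemma compl_mem_nodeFilter_atTop [LinearOrder ι] [Nonempty ι]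
    {X : Set (ℕ → ι)} {g : ℕ → ι} {n : ℕ} :
    Xᶜ ∈ nodeFilter g n atTop ↔ ∃ k, ∀ f ∈ X, f ∈ PiNat.cylinder g n → f n < k := by
  rw [nodeFilter, mem_inf_principal, (atTop_basis.comap _).mem_iff]
  simp only [true_and]
  exact exists_congr fun k => ⟨fun h f hX hc => lt_of_not_ge fun hk => h hk hc hX,
    fun h f hk hc hX => (h f hX hc).not_ge hk⟩

lemma compl_mem_nodeFilter_atBot [LinearOrder ι] [Nonempty ι]
    {X : Set (ℕ → ι)} {g : ℕ → ι} {n : ℕ} :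
    Xᶜ ∈ nodeFilter g n atBot ↔ ∃ k, ∀ f ∈ X, f ∈ PiNat.cylinder g n → k < f n :=
  compl_mem_nodeFilter_atTop (ι := ιᵒᵈ)

lemma smallSet_iff {X : Set (ℕ → ℤ)} :
    SmallSet X ↔ ∀ n g, Xᶜ ∈ nodeFilter g n atTop ∨ Xᶜ ∈ nodeFilter g n atBot := by
  refine forall_congr' fun n => ?_
  have restrict_surjective : Function.Surjective fun (g : ℕ → ℤ) (i : Fin n) => g i :=
    Fin.val_injective.surjective_comp_right
  rw [restrict_surjective.forall]
  refine forall_congr' fun g => ?_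
  rw [compl_mem_nodeFilter_atTop, compl_mem_nodeFilter_atBot, ← exists_or]
  refine exists_congr fun k => ?_
  simp only [Fin.forall_iff, PiNat.cylinder, mem_ofPred_eq]

lemma smallSet_singleton (f : ℕ → ℤ) : SmallSet {f} := fun n _ =>
  ⟨f n + 1, Or.inl fun _ hg _ => (congrFun hg n).trans_lt (lt_add_one _)⟩

end NodeFilter

section SequenceOfReal

lemma eventually_floor_eq {α : Type*} [Ring α] [LinearOrder α] [IsStrictOrderedRing α]
    [FloorRing α] [TopologicalSpace α] [OrderTopology α] {a : α} (ha : (⌊a⌋ : α) ≠ a) :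
    ∀ᶠ b in 𝓝 a, ⌊b⌋ = ⌊a⌋ := by
  filter_upwards [Ioo_mem_nhds ((Int.floor_le a).lt_of_ne ha) (Int.lt_floor_add_one a)] with b hb
  exact Int.floor_eq_iff.2 ⟨hb.1.le, hb.2⟩

/-- The map `ℝ → ℤ^ω` whose `n`-th coordinate jumps from `-∞` to `+∞` at the rational `e n`. The
factor `√2` makes the quotient irrational at all other rationals, so that its floor is locally
constant there. -/
noncomputable def seqOfReal (e : ℕ ≃ ℚ) (x : ℝ) (n : ℕ) : ℤ :=
  ⌊√2 / (x - e n)⌋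

variable (e : ℕ ≃ ℚ)

lemma eventually_seqOfReal_apply_eq {q : ℚ} {i : ℕ} (hi : e i ≠ q) :
    ∀ᶠ x in 𝓝 (q : ℝ), seqOfReal e x i = seqOfReal e q i := by
  have hq : q - e i ≠ 0 := sub_ne_zero.2 hi.symm
  have continuous_quotient : ContinuousAt (fun x : ℝ => √2 / (x - e i)) q :=
    continuousAt_const.div (by fun_prop) (by exact_mod_cast hq)
  have irrational_quotient : Irrational (√2 / ((q : ℝ) - e i)) := by
    exact_mod_cast irrational_sqrt_two.div_ratCast hq
  exact continuous_quotient.eventually (eventually_floor_eq (irrational_quotient.ne_int _).symm)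

lemma eventually_seqOfReal_mem_cylinder (n : ℕ) :
    ∀ᶠ x in 𝓝 (e n : ℝ), seqOfReal e x ∈ PiNat.cylinder (seqOfReal e (e n)) n :=
  (finite_lt_nat n).eventually_all.2 fun _ hi =>
    eventually_seqOfReal_apply_eq e (e.injective.ne (ne_of_lt hi))

lemma tendsto_seqOfReal_nhdsGT (n : ℕ) :
    Tendsto (seqOfReal e) (𝓝[>] (e n : ℝ)) (nodeFilter (seqOfReal e (e n)) n atTop) := by
  refine tendsto_nodeFilter.2 ⟨tendsto_floor_atTop.comp ?_,
    (eventually_seqOfReal_mem_cylinder e n).filter_mono nhdsWithin_le_nhds⟩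
  have tendsto_sub : Tendsto (fun x : ℝ => x - e n) (𝓝[>] (e n : ℝ)) (𝓝[>] 0) := by
    simpa only [Tendsto, sub_self] using (map_subRight_nhdsGT (c := (e n : ℝ)) (a := (e n : ℝ))).le
  exact (tendsto_inv_nhdsGT_zero.comp tendsto_sub).const_mul_atTop (by positivity)

lemma tendsto_seqOfReal_nhdsLT (n : ℕ) :
    Tendsto (seqOfReal e) (𝓝[<] (e n : ℝ)) (nodeFilter (seqOfReal e (e n)) n atBot) := by
  refine tendsto_nodeFilter.2 ⟨tendsto_floor_atBot.comp ?_,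
    (eventually_seqOfReal_mem_cylinder e n).filter_mono nhdsWithin_le_nhds⟩
  have tendsto_sub : Tendsto (fun x : ℝ => x - e n) (𝓝[<] (e n : ℝ)) (𝓝[<] 0) := by
    simpa only [Tendsto, sub_self] using (map_subRight_nhdsLT (c := (e n : ℝ)) (a := (e n : ℝ))).le
  exact (tendsto_inv_nhdsLT_zero.comp tendsto_sub).const_mul_atBot (by positivity)

lemma SmallSet.preimage_seqOfReal {X : Set (ℕ → ℤ)} (hX : SmallSet X) :
    QNowhereDense (seqOfReal e ⁻¹' X) := by
  rw [qNowhereDense_iff, e.surjective.forall]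
  exact fun n => (smallSet_iff.1 hX n (seqOfReal e (e n))).imp
    (fun h => tendsto_seqOfReal_nhdsGT e n h) (fun h => tendsto_seqOfReal_nhdsLT e n h)

lemma exists_qNowhereDense_mem (x : ℝ) : ∃ X, QNowhereDense X ∧ x ∈ X :=
  let e : ℕ ≃ ℚ := (Denumerable.eqv ℚ).symm
  ⟨seqOfReal e ⁻¹' {seqOfReal e x}, (smallSet_singleton _).preimage_seqOfReal e, mem_singleton _⟩

end SequenceOfReal

section RealOfSequence

/-- The factor of `a n` in the series `nestedSum a`. -/
noncomputable def nestedWeight (a : ℕ → ℝ) (n : ℕ) : ℝ :=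
  ∏ i ∈ Finset.range n, |a i| / 4

/-- The `n`-th term of `nestedSum a`. It has the sign of `a n`, and if `|a i| ≤ 1` for all `i`,
its absolute value is at least four times that of the next term. -/
noncomputable def nestedTerm (a : ℕ → ℝ) (n : ℕ) : ℝ :=
  nestedWeight a n * a n

/-- The series `a 0 + (|a 0| / 4) * (a 1 + (|a 1| / 4) * (a 2 + ⋯))`. -/
noncomputable def nestedSum (a : ℕ → ℝ) : ℝ :=
  ∑' n, nestedTerm a n

variable {a b : ℕ → ℝ}

lemma nestedWeight_nonneg (a : ℕ → ℝ) (n : ℕ) : 0 ≤ nestedWeight a n :=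
  Finset.prod_nonneg fun _ _ => by positivity

lemma nestedWeight_pos (ha : ∀ i, a i ≠ 0) (n : ℕ) : 0 < nestedWeight a n :=
  Finset.prod_pos fun i _ => div_pos (abs_pos.2 (ha i)) four_pos

lemma nestedWeight_congr {n : ℕ} (h : ∀ i < n, a i = b i) : nestedWeight a n = nestedWeight b n :=
  Finset.prod_congr rfl fun i hi => by rw [h i (Finset.mem_range.1 hi)]

lemma nestedTerm_congr {n : ℕ} (h : ∀ i ≤ n, a i = b i) : nestedTerm a n = nestedTerm b n := by
  rw [nestedTerm, nestedTerm, nestedWeight_congr fun i hi => h i hi.le, h n le_rfl]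

lemma abs_nestedTerm_succ_le (ha : ∀ i, |a i| ≤ 1) (n : ℕ) :
    |nestedTerm a (n + 1)| ≤ |nestedTerm a n| / 4 := by
  calc |nestedTerm a (n + 1)| = |nestedTerm a n| / 4 * |a (n + 1)| := by
        simp only [nestedTerm, abs_mul, abs_of_nonneg (nestedWeight_nonneg a _)]
        rw [nestedWeight, Finset.prod_range_succ, ← nestedWeight]
        ring
    _ ≤ |nestedTerm a n| / 4 := mul_le_of_le_one_right (by positivity) (ha _)

lemma abs_nestedTerm_add_le (ha : ∀ i, |a i| ≤ 1) (n j : ℕ) :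
    |nestedTerm a (j + n)| ≤ |nestedTerm a n| * (1 / 4) ^ j := by
  induction j with
  | zero => simp
  | succ j ih =>
    calc |nestedTerm a (j + 1 + n)| ≤ |nestedTerm a (j + n)| / 4 := by
          rw [add_right_comm]
          exact abs_nestedTerm_succ_le ha _
      _ ≤ |nestedTerm a n| * (1 / 4) ^ (j + 1) := by
          rw [pow_succ]
          linarith

lemma hasSum_mul_quarter_pow (c : ℝ) :
    HasSum (fun j : ℕ => c * (1 / 4) ^ j) (c * (4 / 3)) := by
  have ratio_sum : (1 - 1 / 4 : ℝ)⁻¹ = 4 / 3 := by norm_num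
  rw [← ratio_sum]
  exact (hasSum_geometric_of_lt_one (by norm_num) (by norm_num)).mul_left c

lemma summable_nestedTerm (ha : ∀ i, |a i| ≤ 1) : Summable (nestedTerm a) :=
  (hasSum_mul_quarter_pow _).summable.of_norm_bounded (abs_nestedTerm_add_le ha 0)

lemma abs_nestedSum_sub_sub_le (ha : ∀ i, |a i| ≤ 1) (n : ℕ) :
    |nestedSum a - ∑ i ∈ Finset.range n, nestedTerm a i - nestedTerm a n|
      ≤ 1 / 3 * |nestedTerm a n| := by
  have tail_eq : nestedSum a - ∑ i ∈ Finset.range n, nestedTerm a i - nestedTerm a n =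
      ∑' j, nestedTerm a (j + (n + 1)) := by
    rw [nestedSum, ← (summable_nestedTerm ha).sum_add_tsum_nat_add (n + 1),
      Finset.sum_range_succ]
    ring
  rw [tail_eq]
  calc |∑' j, nestedTerm a (j + (n + 1))| ≤ |nestedTerm a (n + 1)| * (4 / 3) :=
        tsum_of_norm_bounded (f := fun j => nestedTerm a (j + (n + 1)))
          (hasSum_mul_quarter_pow _) (abs_nestedTerm_add_le ha (n + 1))
    _ ≤ 1 / 3 * |nestedTerm a n| := by linarith [abs_nestedTerm_succ_le ha n]

lemma tendsto_nhdsGT_of_abs_sub_sub_le {β : Type*} {l : Filter β} {u v : β → ℝ} {q c : ℝ}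
    (hc : c < 1) (hu : Tendsto u l (𝓝[>] 0)) (h : ∀ᶠ x in l, |v x - q - u x| ≤ c * |u x|) :
    Tendsto v l (𝓝[>] q) := by
  rw [tendsto_nhdsWithin_iff] at hu ⊢
  obtain ⟨u_tendsto, u_pos⟩ := hu
  have bounds : ∀ᶠ x in l, q < v x ∧ v x ≤ q + (1 + c) * u x := by
    filter_upwards [u_pos, h] with x hx hv
    have hx : 0 < u x := hx
    rw [abs_of_pos hx, abs_le] at hv
    constructor <;> linarith [mul_lt_mul_of_pos_right hc hx]
  refine ⟨tendsto_of_tendsto_of_tendsto_of_le_of_le' tendsto_const_nhds ?_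
    (bounds.mono fun x hx => hx.1.le) (bounds.mono fun x hx => hx.2), bounds.mono fun x hx => hx.1⟩
  simpa using (u_tendsto.const_mul (1 + c)).const_add q

lemma tendsto_nhdsLT_of_abs_sub_sub_le {β : Type*} {l : Filter β} {u v : β → ℝ} {q c : ℝ}
    (hc : c < 1) (hu : Tendsto u l (𝓝[<] 0)) (h : ∀ᶠ x in l, |v x - q - u x| ≤ c * |u x|) :
    Tendsto v l (𝓝[<] q) := by
  have neg_tendsto : Tendsto (fun x => -v x) l (𝓝[>] (-q)) := by
    refine tendsto_nhdsGT_of_abs_sub_sub_le hc (u := fun x => -u x) ?_ (h.mono fun x hx => ?_)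
    · simpa only [Function.comp_def, neg_zero] using tendsto_neg_nhdsLT.comp hu
    · have neg_sub_eq : -v x - -q - -u x = -(v x - q - u x) := by ring
      rwa [neg_sub_eq, abs_neg, abs_neg]
  simpa only [Function.comp_def, neg_neg] using tendsto_neg_nhdsGT.comp neg_tendsto

/-- A map from `ℤ` to the nonzero rationals of `[-1, 1]` that tends to `0` from above at `+∞` and
from below at `-∞`. -/
noncomputable def oddRecip (m : ℤ) : ℝ :=
  (2 * m + 1)⁻¹

lemma oddRecip_ne_zero (m : ℤ) : oddRecip m ≠ 0 := by
  have : 2 * m + 1 ≠ 0 := by omega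
  exact inv_ne_zero (by exact_mod_cast this)

lemma abs_oddRecip_le_one (m : ℤ) : |oddRecip m| ≤ 1 := by
  rw [oddRecip, abs_inv]
  have : 1 ≤ |2 * m + 1| := Int.one_le_abs (by omega)
  exact inv_le_one_of_one_le₀ (by exact_mod_cast this)

lemma tendsto_oddRecip_atTop : Tendsto oddRecip atTop (𝓝[>] 0) :=
  tendsto_inv_atTop_nhdsGT_zero.comp <| tendsto_atTop_add_const_right _ _ <|
    tendsto_intCast_atTop_atTop.const_mul_atTop two_pos

lemma tendsto_oddRecip_atBot : Tendsto oddRecip atBot (𝓝[<] 0) :=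
  tendsto_inv_atBot_nhdsLT_zero.comp <| tendsto_atBot_add_const_right _ _ <|
    (tendsto_intCast_atBot_iff.2 tendsto_id).const_mul_atBot two_pos

/-- The map `ℤ^ω → ℝ` given by the nested series of the reciprocals `1 / (2 * f n + 1)`. -/
noncomputable def realOfSeq (f : ℕ → ℤ) : ℝ :=
  nestedSum (oddRecip ∘ f)

/-- The limit of `realOfSeq` at both ends of the node `(g 0, …, g (n - 1))`. -/
noncomputable def nodeLimit (g : ℕ → ℤ) (n : ℕ) : ℝ :=
  ∑ i ∈ Finset.range n, nestedTerm (oddRecip ∘ g) i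

lemma nodeLimit_mem_range_ratCast (g : ℕ → ℤ) (n : ℕ) : nodeLimit g n ∈ range ((↑) : ℚ → ℝ) := by
  refine ⟨∑ i ∈ Finset.range n,
    (∏ j ∈ Finset.range i, |(2 * g j + 1 : ℚ)⁻¹| / 4) * (2 * g i + 1 : ℚ)⁻¹, ?_⟩
  push_cast
  rfl

lemma eventually_abs_realOfSeq_sub_sub_le (g : ℕ → ℤ) (n : ℕ) (l : Filter ℤ) :
    ∀ᶠ f in nodeFilter g n l,
      |realOfSeq f - nodeLimit g n - nestedWeight (oddRecip ∘ g) n * oddRecip (f n)|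
        ≤ 1 / 3 * |nestedWeight (oddRecip ∘ g) n * oddRecip (f n)| := by
  filter_upwards [eventually_mem_cylinder_nodeFilter g n l] with f hf
  have agree : ∀ i < n, (oddRecip ∘ f) i = (oddRecip ∘ g) i := fun i hi =>
    congrArg oddRecip (hf i hi)
  have limit_eq : ∑ i ∈ Finset.range n, nestedTerm (oddRecip ∘ f) i = nodeLimit g n :=
    Finset.sum_congr rfl fun i hi =>
      nestedTerm_congr fun j hj => agree j (hj.trans_lt (Finset.mem_range.1 hi))
  rw [← nestedWeight_congr agree, ← limit_eq]
  exact abs_nestedSum_sub_sub_le (fun i => abs_oddRecip_le_one (f i)) n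

lemma tendsto_realOfSeq_atTop (g : ℕ → ℤ) (n : ℕ) :
    Tendsto realOfSeq (nodeFilter g n atTop) (𝓝[>] nodeLimit g n) := by
  have weight_pos := nestedWeight_pos (fun i => oddRecip_ne_zero (g i)) n
  refine tendsto_nhdsGT_of_abs_sub_sub_le (by norm_num) ?_
    (eventually_abs_realOfSeq_sub_sub_le g n atTop)
  simpa only [Function.comp_def, mul_zero] using TendstoNhdsWithinIoi.const_mul weight_pos
    (tendsto_oddRecip_atTop.comp (tendsto_apply_nodeFilter g n atTop))

lemma tendsto_realOfSeq_atBot (g : ℕ → ℤ) (n : ℕ) :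
    Tendsto realOfSeq (nodeFilter g n atBot) (𝓝[<] nodeLimit g n) := by
  have weight_pos := nestedWeight_pos (fun i => oddRecip_ne_zero (g i)) n
  refine tendsto_nhdsLT_of_abs_sub_sub_le (by norm_num) ?_
    (eventually_abs_realOfSeq_sub_sub_le g n atBot)
  simpa only [Function.comp_def, mul_zero] using TendstoNhdsWithinIio.const_mul weight_pos
    (tendsto_oddRecip_atBot.comp (tendsto_apply_nodeFilter g n atBot))

lemma QNowhereDense.preimage_realOfSeq {X : Set ℝ} (hX : QNowhereDense X) :
    SmallSet (realOfSeq ⁻¹' X) := by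
  refine smallSet_iff.2 fun n g => ?_
  obtain ⟨q, hq⟩ := nodeLimit_mem_range_ratCast g n
  have hside := qNowhereDense_iff.1 hX q
  rw [hq] at hside
  exact hside.imp (fun h => tendsto_realOfSeq_atTop g n h) (fun h => tendsto_realOfSeq_atBot g n h)

end RealOfSequence

lemma aleph0_lt_coveringNumber_qNowhereDense : ℵ₀ < coveringNumber QNowhereDense :=
  aleph0_lt_coveringNumber_of_isMeagre (fun _ hX => hX.isNowhereDense.isMeagre)
    exists_qNowhereDense_mem

lemma coveringNumber_qNowhereDense : coveringNumber QNowhereDense = coveringNumber SmallSet :=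
  le_antisymm
    (coveringNumber_le_of_preimage (seqOfReal (Denumerable.eqv ℚ).symm)
      (fun _ hX => hX.preimage_seqOfReal _) fun f => ⟨{f}, smallSet_singleton f, rfl⟩)
    (coveringNumber_le_of_preimage realOfSeq (fun _ hX => hX.preimage_realOfSeq)
      exists_qNowhereDense_mem)

theorem stmt1 :
    sInf {c : Cardinal |
        ∃ S : Set (Set ℝ), (∀ A ∈ S, QVeryMeagre A) ∧ ⋃₀ S = Set.univ ∧ #S = c} =
    sInf {c : Cardinal |
        ∃ S : Set (Set (ℕ → ℤ)), (∀ A ∈ S, SmallSet A) ∧ ⋃₀ S = Set.univ ∧ #S = c} := by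
  change coveringNumber (IsCountableUnionOf QNowhereDense) = coveringNumber SmallSet
  rw [coveringNumber_isCountableUnionOf exists_qNowhereDense_mem
    aleph0_lt_coveringNumber_qNowhereDense, coveringNumber_qNowhereDense]
end

section
/- Let i, j, n, m be integers with i + 1 ≤ j, i < n and j < m. Then for every set A ⊆ ω × {0,…,n−1} that is not contained in any set B_n(a,k) with a an i-element subset of {0,…,n−1} and k ∈ ω, and for every function H : A → (ω × {0,…,m−1})^ω, there exist a finite tree t of finite sequences from ω × {0,…,m−1} (closed under initial segments), a function F assigning to each τ ∈ t a set of the form B_m(a,k) with a a j-element subset of {0,…,m−1} and k ∈ ω, a finite set C ⊆ (ω × {0,…,m−1})^ω, and sets B₀, B₁ ⊆ A with B₀ ∪ B₁ not contained in any B_n(a,k) (a an i-element subset of {0,…,n−1}, k ∈ ω), such that: (i) for all distinct b, b′ ∈ B₀ there exist τ ∈ t and distinct y, y′ ∈ F(τ) such that τ⌢y is an initial segment of H(b) and τ⌢y′ is an initial segment of H(b′); and (ii) for every N ∈ ω the set {b ∈ B₁ : for every c ∈ C, H(b)↾N is not an initial segment of c} is finite. -/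
/-- `B_n(a,k) = (ω × a) ∪ ({0,…,k−1} × ({0,…,n−1} \ a))` as a subset of `ω × {0,…,n−1}`. -/
def Bset (n : ℕ) (a : Finset (Fin n)) (k : ℕ) : Set (ℕ × Fin n) :=
  {p | p.2 ∈ a ∨ (p.1 < k ∧ p.2 ∉ a)}

/-- The finite sequence `l` is an initial segment of the infinite sequence `f`. -/
def IsInitSeg {Y : Type*} (l : List Y) (f : ℕ → Y) : Prop :=
  l = (List.range l.length).map f

/-!
`A` is covered by some `B_n(a, k)` with `|a| = i` iff at most `i` of its columns are infinite, so
fix `i + 1` infinite columns of `A`. Each of them has an infinite subset on which `H` either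
converges to a single sequence (by König's lemma, when the sequences `H b` form a finitely
branching tree) or fans out at a node `τ`: all `H b` extend `τ`, with pairwise distinct next
values, which may be taken in a single column of `ω × m`. The convergent columns make up `B₁`.
Thin out the fans so that all next values are distinct and none occurs in a stem; then two
sequences from the fans have incomparable initial segments `τ⌢z` and `τ'⌢z'`, so they split at a
node below a stem. All values involved lie in finitely many points and at most `i + 1 ≤ j`
columns, so a single `B_m(a, k)` serves at every node.
-/

section Columns

variable {n : ℕ}

open Classical in
/-- The columns `ω × {c}` that meet `A` in an infinite set. -/
noncomputable def infiniteColumns (A : Set (ℕ × Fin n)) : Finset (Fin n) :=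
  {c | {p ∈ A | p.2 = c}.Infinite}

theorem mem_infiniteColumns {A : Set (ℕ × Fin n)} {c : Fin n} :
    c ∈ infiniteColumns A ↔ {p ∈ A | p.2 = c}.Infinite := by
  simp [infiniteColumns]

theorem finite_column_Bset {a : Finset (Fin n)} {c : Fin n} (hc : c ∉ a) (k : ℕ) :
    {p ∈ Bset n a k | p.2 = c}.Finite := by
  refine ((Set.finite_lt_nat k).image fun x => (x, c)).subset ?_
  rintro ⟨x, _⟩ ⟨hca | ⟨hxk, _⟩, rfl⟩
  · exact absurd hca hc
  · exact ⟨x, hxk, rfl⟩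

theorem exists_subset_Bset_iff {A : Set (ℕ × Fin n)} {a : Finset (Fin n)} :
    (∃ k, A ⊆ Bset n a k) ↔ infiniteColumns A ⊆ a := by
  constructor
  · rintro ⟨k, hAk⟩ c hc
    by_contra hca
    exact mem_infiniteColumns.1 hc
      ((finite_column_Bset hca k).subset fun p hp => ⟨hAk hp.1, hp.2⟩)
  · intro hAa
    have hfin : {p ∈ A | p.2 ∉ a}.Finite := by
      refine Set.Finite.of_finite_fibers Prod.snd (Set.toFinite _) ?_
      rintro _ ⟨p, ⟨-, hpa⟩, rfl⟩
      have hcol : {q ∈ A | q.2 = p.2}.Finite := by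
        by_contra hinf
        exact hpa (hAa (mem_infiniteColumns.2 hinf))
      exact hcol.subset fun q hq => ⟨hq.1.1, hq.2⟩
    obtain ⟨k, hk⟩ := (hfin.image Prod.fst).bddAbove
    refine ⟨k + 1, fun p hp => ?_⟩
    by_cases hpa : p.2 ∈ a
    · exact Or.inl hpa
    · exact Or.inr ⟨Nat.lt_succ_of_le (hk ⟨p, ⟨hp, hpa⟩, rfl⟩), hpa⟩

theorem exists_card_eq_subset_Bset_iff {i : ℕ} (hin : i ≤ n) {A : Set (ℕ × Fin n)} :
    (∃ (a : Finset (Fin n)) (k : ℕ), a.card = i ∧ A ⊆ Bset n a k) ↔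
      (infiniteColumns A).card ≤ i := by
  constructor
  · rintro ⟨a, k, rfl, hAk⟩
    exact Finset.card_le_card (exists_subset_Bset_iff.1 ⟨k, hAk⟩)
  · intro hcard
    obtain ⟨a, hAa, ha⟩ := Finset.exists_superset_card_eq hcard (by simpa using hin)
    obtain ⟨k, hk⟩ := exists_subset_Bset_iff.2 hAa
    exact ⟨a, k, ha, hk⟩

theorem infiniteColumns_finite_union_columns_subset {D : Set (ℕ × Fin n)} (hD : D.Finite)
    (a : Finset (Fin n)) :
    infiniteColumns (D ∪ {p | p.2 ∈ a}) ⊆ a := by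
  intro c hc
  by_contra hca
  refine mem_infiniteColumns.1 hc (hD.subset ?_)
  rintro p ⟨hpD | hpa, rfl⟩
  · exact hpD
  · exact absurd hpa hca

end Columns

section InitSeg

variable {Y : Type*} {l l' : List Y} {f : ℕ → Y}

theorem isInitSeg_iff_getElem : IsInitSeg l f ↔ ∀ p (hp : p < l.length), l[p] = f p := by
  simp [IsInitSeg, List.ext_getElem_iff]

theorem isInitSeg_map_range_iff {g : ℕ → Y} {N : ℕ} :
    IsInitSeg ((List.range N).map f) g ↔ ∀ p < N, f p = g p := by
  simp [isInitSeg_iff_getElem]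

theorem IsInitSeg.of_prefix (hl' : IsInitSeg l' f) (h : l <+: l') : IsInitSeg l f := by
  rw [isInitSeg_iff_getElem] at hl' ⊢
  intro p hp
  rw [h.getElem hp, hl']

theorem IsInitSeg.concat (h : IsInitSeg l f) : IsInitSeg (l ++ [f l.length]) f := by
  rw [IsInitSeg, List.length_append, List.length_singleton, List.range_succ, List.map_append, ← h,
    List.map_singleton]

theorem exists_concat_prefix_of_not_prefix : ∀ {l l' : List Y}, ¬ l <+: l' → ¬ l' <+: l →
    ∃ σ y y', y ≠ y' ∧ σ ++ [y] <+: l ∧ σ ++ [y'] <+: l'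
  | [], _, h, _ => absurd List.nil_prefix h
  | _, [], _, h' => absurd List.nil_prefix h'
  | x :: l, x' :: l', h, h' => by
    by_cases hx : x = x'
    · subst hx
      rw [List.cons_prefix_cons, and_iff_right rfl] at h h'
      obtain ⟨σ, y, y', hne, hy, hy'⟩ := exists_concat_prefix_of_not_prefix h h'
      exact ⟨x :: σ, y, y', hne, by simpa using hy, by simpa using hy'⟩
    · exact ⟨[], x, x', hx, by simp, by simp⟩

theorem not_concat_prefix_concat {z z' : Y} (hz : z ∉ l') (hne : z ≠ z') :
    ¬ l ++ [z] <+: l' ++ [z'] := by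
  intro h
  have hmem : z ∈ l' ++ [z'] := h.subset (by simp)
  simp_all

theorem exists_split_of_notMem {τ τ' : List Y} {f' : ℕ → Y} (hτ : IsInitSeg τ f)
    (hτ' : IsInitSeg τ' f') (hf : f τ.length ∉ τ') (hf' : f' τ'.length ∉ τ)
    (hne : f τ.length ≠ f' τ'.length) :
    ∃ σ, σ <+: τ ∧ ∃ y ∈ τ ++ [f τ.length], ∃ y' ∈ τ' ++ [f' τ'.length], y ≠ y' ∧
      IsInitSeg (σ ++ [y]) f ∧ IsInitSeg (σ ++ [y']) f' := by
  obtain ⟨σ, y, y', hyy', hy, hy'⟩ := exists_concat_prefix_of_not_prefix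
    (not_concat_prefix_concat hf hne) (not_concat_prefix_concat hf' hne.symm)
  have hστ : σ <+: τ := by
    rcases List.prefix_concat_iff.1 hy with heq | hpre
    · rw [(List.append_inj' heq rfl).1]
    · exact (List.prefix_append σ [y]).trans hpre
  exact ⟨σ, hστ, y, hy.subset (by simp), y', hy'.subset (by simp), hyy',
    hτ.concat.of_prefix hy, hτ'.concat.of_prefix hy'⟩

end InitSeg

theorem exists_injective_forall_mem {ι α : Type*} [Countable ι] {X : ι → Set α}
    (hX : ∀ i, (X i).Infinite) : ∃ f : ι → α, f.Injective ∧ ∀ i, f i ∈ X i := by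
  classical
  obtain ⟨e, he⟩ := Countable.exists_injective_nat ι
  choose t htX ht using fun i => (hX i).exists_subset_card_eq (e i + 1)
  have hall : ∀ s : Finset ι, s.card ≤ (s.biUnion t).card := by
    intro s
    rcases s.eq_empty_or_nonempty with rfl | hs
    · simp
    obtain ⟨i, hi, hmax⟩ := s.exists_max_image e hs
    calc s.card = (s.image e).card := (Finset.card_image_of_injective s he).symm
      _ ≤ (Finset.range (e i + 1)).card := Finset.card_le_card <| Finset.image_subset_iff.2
          fun p hp => Finset.mem_range.2 (Nat.lt_succ_of_le (hmax p hp))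
      _ = (t i).card := by rw [Finset.card_range, ht]
      _ ≤ (s.biUnion t).card := Finset.card_le_card (Finset.subset_biUnion_of_mem t hi)
  obtain ⟨f, hf, hft⟩ := (Finset.all_card_le_biUnion_card_iff_exists_injective t).1 hall
  exact ⟨f, hf, fun i => htX i (hft i)⟩

section Families

variable {P Y ι : Type*} {h : P → ℕ → Y}

/-- Convergence of `h` along `B` to the set `C` of limits: for every `N`, all but finitely many
`b ∈ B` are such that `h b` agrees below `N` with a member of `C`. -/
def ClustersAt (h : P → ℕ → Y) (B : Set P) (C : Set (ℕ → Y)) : Prop :=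
  ∀ N : ℕ, {b ∈ B | ∀ c ∈ C, ¬ IsInitSeg ((List.range N).map (h b)) c}.Finite

/-- Any two sequences `h b`, `h b'` with `b ≠ b'` in `B` split at a node of `t`, with both next
values in `E`. The set `E` is the same for all nodes. -/
def IsSplitBy (h : P → ℕ → Y) (t : Set (List Y)) (E : Set Y) (B : Set P) : Prop :=
  ∀ b ∈ B, ∀ b' ∈ B, b ≠ b' → ∃ τ ∈ t, ∃ y ∈ E, ∃ y' ∈ E, y ≠ y' ∧
    IsInitSeg (τ ++ [y]) (h b) ∧ IsInitSeg (τ ++ [y']) (h b')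

/-- The values `y` such that `τ⌢y` is an initial segment of `h b` for some `b ∈ X`, that is, the
immediate successors of `τ` in the tree spanned by the sequences `h b`. -/
def nextValues (h : P → ℕ → Y) (X : Set P) (τ : List Y) : Set Y :=
  (fun b => h b τ.length) '' {b ∈ X | IsInitSeg τ (h b)}

/-- The sequences `h b` with `b ∈ V` all extend the stem `τ` and are pairwise distinct immediately
above it. -/
structure IsFan (h : P → ℕ → Y) (τ : List Y) (V : Set P) : Prop where
  isInitSeg : ∀ b ∈ V, IsInitSeg τ (h b)
  injOn : V.InjOn fun b => h b τ.length

/-- The tree of all initial segments of the finite sequences `τ i`. -/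
def prefixTree (τ : ι → List Y) : Set (List Y) :=
  {σ | ∃ i, σ <+: τ i}

theorem ClustersAt.iUnion [Finite ι] {B : ι → Set P} {C : ι → Set (ℕ → Y)}
    (hBC : ∀ i, ClustersAt h (B i) (C i)) : ClustersAt h (⋃ i, B i) (⋃ i, C i) := by
  intro N
  refine (Set.finite_iUnion fun i => hBC i N).subset ?_
  rintro b ⟨hb, hbC⟩
  obtain ⟨i, hi⟩ := Set.mem_iUnion.1 hb
  exact Set.mem_iUnion.2 ⟨i, hi, fun c hc => hbC c (Set.mem_iUnion.2 ⟨i, hc⟩)⟩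

theorem IsSplitBy.mono {t : Set (List Y)} {E E' : Set Y} {B : Set P} (hB : IsSplitBy h t E B)
    (hE : E ⊆ E') : IsSplitBy h t E' B := by
  intro b hb b' hb' hne
  obtain ⟨τ, hτ, y, hy, y', hy', hsplit⟩ := hB b hb b' hb' hne
  exact ⟨τ, hτ, y, hE hy, y', hE hy', hsplit⟩

theorem IsFan.mono {τ : List Y} {V V' : Set P} (hV : IsFan h τ V) (hV' : V' ⊆ V) : IsFan h τ V' :=
  ⟨fun b hb => hV.isInitSeg b (hV' hb), hV.injOn.mono hV'⟩

theorem prefixTree_finite [Finite ι] (τ : ι → List Y) : (prefixTree τ).Finite := by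
  refine (Set.finite_iUnion fun i => (τ i).inits.finite_toSet).subset ?_
  rintro σ ⟨i, hi⟩
  exact Set.mem_iUnion.2 ⟨i, (List.mem_inits _ _).2 hi⟩

theorem mem_prefixTree_of_prefix {τ : ι → List Y} {σ ρ : List Y} (hσ : σ ∈ prefixTree τ)
    (hρ : ρ <+: σ) : ρ ∈ prefixTree τ := by
  obtain ⟨i, hi⟩ := hσ
  exact ⟨i, hρ.trans hi⟩

-- An ultrafilter on `X` picks the branch: it decides each value, as only finitely many occur.
theorem exists_branch_of_finite_nextValues {X : Set P} (hX : X.Infinite)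
    (hfin : ∀ τ, (nextValues h X τ).Finite) :
    ∃ c : ℕ → Y, ∀ N, {b ∈ X | ∀ p < N, h b p = c p}.Infinite := by
  have := Filter.cofinite_inf_principal_neBot_iff.2 hX
  obtain ⟨U, hU⟩ := Ultrafilter.exists_le (Filter.cofinite ⊓ Filter.principal X)
  have hUX : X ∈ U := Filter.le_principal_iff.1 (hU.trans inf_le_right)
  have hval : ∀ N, ∃ y, ∀ᶠ b in U, h b N = y := by
    intro N
    induction N using Nat.strong_induction_on with
    | _ N ih =>
      choose c hc using ih
      let τ : List Y := List.ofFn fun p : Fin N => c p p.2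
      have hτ : ∀ᶠ b in U, IsInitSeg τ (h b) := by
        filter_upwards [Filter.eventually_all.2 fun p : Fin N => hc p p.2] with b hb
        simpa [τ, isInitSeg_iff_getElem] using fun p hp => (hb ⟨p, hp⟩).symm
      have hnext : ∀ᶠ b in U, h b N ∈ nextValues h X τ := by
        filter_upwards [hUX, hτ] with b hbX hbτ
        exact ⟨b, ⟨hbX, hbτ⟩, by simp [τ]⟩
      obtain ⟨y, -, hy⟩ := Ultrafilter.eq_pure_of_finite_mem (hfin τ)
        (Ultrafilter.mem_map.2 hnext)
      exact ⟨y, Ultrafilter.mem_map.1 (hy ▸ Ultrafilter.mem_pure.2 rfl : {y} ∈ U.map _)⟩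
  choose c hc using hval
  refine ⟨c, fun N hN => ?_⟩
  have hmem : {b ∈ X | ∀ p < N, h b p = c p} ∈ U :=
    Filter.inter_mem hUX ((Set.finite_lt_nat N).eventually_all.2 fun p _ => hc p)
  exact U.compl_notMem_iff.2 hmem (hU.trans inf_le_left hN.compl_mem_cofinite)

theorem exists_clustersAt_of_finite_nextValues {X : Set P} (hX : X.Infinite)
    (hfin : ∀ τ, (nextValues h X τ).Finite) :
    ∃ U ⊆ X, U.Infinite ∧ ∃ c, ClustersAt h U {c} := by
  obtain ⟨c, hc⟩ := exists_branch_of_finite_nextValues hX hfin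
  obtain ⟨f, hf, hfc⟩ := exists_injective_forall_mem hc
  refine ⟨Set.range f, ?_, Set.infinite_range_of_injective hf, c, fun N => ?_⟩
  · rintro _ ⟨k, rfl⟩
    exact (hfc k).1
  · refine ((Set.finite_lt_nat N).image f).subset ?_
    rintro _ ⟨⟨k, rfl⟩, hk⟩
    refine ⟨k, ?_, rfl⟩
    by_contra hNk
    exact hk c rfl (isInitSeg_map_range_iff.2 fun p hp =>
      (hfc k).2 p (hp.trans_le (not_lt.1 hNk)))

theorem exists_isFan_of_infinite_nextValues {X : Set P} {τ : List Y}
    (hτ : (nextValues h X τ).Infinite) : ∃ V ⊆ X, V.Infinite ∧ IsFan h τ V := by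
  obtain ⟨V, hVX, hV⟩ := Set.exists_subset_bijOn {b ∈ X | IsInitSeg τ (h b)} fun b => h b τ.length
  rw [nextValues, ← hV.image_eq] at hτ
  exact ⟨V, fun b hb => (hVX hb).1, hτ.of_image, fun b hb => (hVX hb).2, hV.injOn⟩

theorem exists_clustersAt_or_exists_isFan (h : P → ℕ → Y) {X : Set P} (hX : X.Infinite) :
    (∃ U ⊆ X, U.Infinite ∧ ∃ c, ClustersAt h U {c}) ∨
      ∃ V ⊆ X, V.Infinite ∧ ∃ τ, IsFan h τ V := by
  by_cases hfin : ∀ τ, (nextValues h X τ).Finite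
  · exact Or.inl (exists_clustersAt_of_finite_nextValues hX hfin)
  · push Not at hfin
    obtain ⟨τ, hτ⟩ := hfin
    obtain ⟨V, hVX, hV, hfan⟩ := exists_isFan_of_infinite_nextValues hτ
    exact Or.inr ⟨V, hVX, hV, τ, hfan⟩

theorem exists_selection_injective_notMem [Countable ι] {V : ι → Set P} {g : ι → P → Y} {D : Set Y}
    (hV : ∀ i, (V i).Infinite) (hg : ∀ i, (V i).InjOn (g i)) (hD : D.Finite) :
    ∃ w : ℕ × ι → P, (∀ q, w q ∈ V q.2) ∧ (Function.Injective fun q => g q.2 (w q)) ∧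
      ∀ q, g q.2 (w q) ∉ D := by
  obtain ⟨z, hz, hzmem⟩ := exists_injective_forall_mem
    (X := fun q : ℕ × ι => g q.2 '' V q.2 \ D) fun q => ((hV q.2).image (hg q.2)).sdiff hD
  choose w hwV hwz using fun q => (hzmem q).1
  refine ⟨w, hwV, ?_, fun q => ?_⟩
  · simpa only [hwz] using hz
  · rw [hwz]
    exact (hzmem q).2

theorem exists_isSplitBy_of_isFan [Finite ι] {V : ι → Set P} {τ : ι → List Y}
    (hV : ∀ i, (V i).Infinite) (hfan : ∀ i, IsFan h (τ i) (V i)) :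
    ∃ W : Set P, W ⊆ ⋃ i, V i ∧ (∀ i, (V i ∩ W).Infinite) ∧
      IsSplitBy h (prefixTree τ) ((⋃ i, {y | y ∈ τ i}) ∪ ⋃ i, nextValues h (V i) (τ i)) W := by
  set D : Set Y := ⋃ i, {y | y ∈ τ i}
  have hDfin : D.Finite := Set.finite_iUnion fun i => (τ i).finite_toSet
  obtain ⟨w, hwV, hnext, hnextD⟩ :=
    exists_selection_injective_notMem hV (fun i => (hfan i).injOn) hDfin
  have hstem : ∀ q, IsInitSeg (τ q.2) (h (w q)) := fun q => (hfan q.2).isInitSeg _ (hwV q)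
  have hnotMem : ∀ q i, h (w q) (τ q.2).length ∉ τ i := fun q i hi =>
    hnextD q (Set.mem_iUnion.2 ⟨i, hi⟩)
  have hmemE : ∀ q, ∀ y ∈ τ q.2 ++ [h (w q) (τ q.2).length],
      y ∈ D ∪ ⋃ i, nextValues h (V i) (τ i) := by
    intro q y hy
    rcases List.mem_append.1 hy with hy | hy
    · exact Or.inl (Set.mem_iUnion.2 ⟨q.2, hy⟩)
    · rw [List.mem_singleton.1 hy]
      exact Or.inr (Set.mem_iUnion.2 ⟨q.2, w q, ⟨hwV q, hstem q⟩, rfl⟩)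
  refine ⟨Set.range w, ?_, fun i => ?_, ?_⟩
  · rintro _ ⟨q, rfl⟩
    exact Set.mem_iUnion.2 ⟨q.2, hwV q⟩
  · have hw : Function.Injective fun k => w (k, i) := fun k k' hkk' =>
      congrArg Prod.fst (hnext (congrArg (fun b => h b (τ i).length) hkk'))
    refine (Set.infinite_range_of_injective hw).mono ?_
    rintro _ ⟨k, rfl⟩
    exact ⟨hwV (k, i), _, rfl⟩
  · rintro _ ⟨q, rfl⟩ _ ⟨q', rfl⟩ hne
    have hnext_ne := hnext.ne fun hqq' => hne (congrArg w hqq')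
    obtain ⟨σ, hσ, y, hy, y', hy', hsplit⟩ :=
      exists_split_of_notMem (hstem q) (hstem q') (hnotMem q q'.2) (hnotMem q' q.2) hnext_ne
    exact ⟨σ, ⟨q.2, hσ⟩, y, hmemE q y hy, y', hmemE q' y' hy', hsplit⟩

end Families

section SplitOrCluster

variable {P ι : Type*} {m j : ℕ} {h : P → ℕ → ℕ × Fin m}

theorem IsFan.exists_snd_eq {τ : List (ℕ × Fin m)} {V : Set P} (hfan : IsFan h τ V)
    (hV : V.Infinite) :
    ∃ V' ⊆ V, V'.Infinite ∧ IsFan h τ V' ∧ ∃ d, ∀ y ∈ nextValues h V' τ, y.2 = d := by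
  obtain ⟨d, hd⟩ : ∃ d, {b ∈ V | (h b τ.length).2 = d}.Infinite := by
    by_contra! hfin
    exact hV (Set.Finite.of_finite_fibers (fun b => (h b τ.length).2) (Set.toFinite _)
      fun d _ => hfin d)
  refine ⟨_, Set.sep_subset _ _, hd, hfan.mono (Set.sep_subset _ _), d, ?_⟩
  rintro _ ⟨b, ⟨⟨-, hbd⟩, -⟩, rfl⟩
  exact hbd

theorem exists_isSplitBy_Bset [Fintype ι] (hι : Fintype.card ι ≤ j) (hjm : j ≤ m)
    {V : ι → Set P} (hV : ∀ i, (V i).Infinite) (hfan : ∀ i, ∃ τ, IsFan h τ (V i)) :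
    ∃ (τ : ι → List (ℕ × Fin m)) (a : Finset (Fin m)) (k : ℕ) (W : Set P),
      a.card = j ∧ W ⊆ ⋃ i, V i ∧ (∀ i, (V i ∩ W).Infinite) ∧
        IsSplitBy h (prefixTree τ) (Bset m a k) W := by
  choose τ hτ using hfan
  choose V' hV'V hV' hfan' d hd using fun i => (hτ i).exists_snd_eq (hV i)
  obtain ⟨W, hWV, hW, hsplit⟩ := exists_isSplitBy_of_isFan hV' hfan'
  have hcard : (infiniteColumns
      ((⋃ i, {y | y ∈ τ i}) ∪ {y | y.2 ∈ Finset.univ.image d})).card ≤ j :=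
    calc _ ≤ (Finset.univ.image d).card := Finset.card_le_card <|
          infiniteColumns_finite_union_columns_subset
            (Set.finite_iUnion fun i => (τ i).finite_toSet) _
      _ ≤ j := Finset.card_image_le.trans hι
  obtain ⟨a, k, ha, hE⟩ := (exists_card_eq_subset_Bset_iff hjm).2 hcard
  refine ⟨τ, a, k, W, ha, hWV.trans (Set.iUnion_mono hV'V),
    fun i => (hW i).mono (Set.inter_subset_inter_left W (hV'V i)), hsplit.mono ?_⟩
  refine (Set.union_subset_union_right _ (Set.iUnion_subset fun i y hy => ?_)).trans hE
  exact Finset.mem_image.2 ⟨i, Finset.mem_univ i, (hd i y hy).symm⟩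

theorem exists_isSplitBy_clustersAt [Fintype ι] (hι : Fintype.card ι ≤ j) (hjm : j ≤ m)
    (h : P → ℕ → ℕ × Fin m) {X : ι → Set P} (hX : ∀ i, (X i).Infinite) :
    ∃ (t : Set (List (ℕ × Fin m))) (a : Finset (Fin m)) (k : ℕ) (C : Set (ℕ → ℕ × Fin m))
      (B₀ B₁ : Set P), t.Finite ∧ (∀ s ∈ t, ∀ r, r <+: s → r ∈ t) ∧ a.card = j ∧ C.Finite ∧
      B₀ ⊆ ⋃ i, X i ∧ B₁ ⊆ ⋃ i, X i ∧ (∀ i, (X i ∩ (B₀ ∪ B₁)).Infinite) ∧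
      IsSplitBy h t (Bset m a k) B₀ ∧ ClustersAt h B₁ C := by
  classical
  let Clusters (i : ι) : Prop := ∃ U ⊆ X i, U.Infinite ∧ ∃ c, ClustersAt h U {c}
  choose U hUX hU c hc using fun i : {i // Clusters i} => i.2
  choose V hVX hV hfan using fun i : {i // ¬ Clusters i} =>
    (exists_clustersAt_or_exists_isFan h (hX i)).resolve_left i.2
  have hcard : Fintype.card {i // ¬ Clusters i} ≤ j :=
    (Fintype.card_subtype_le _).trans hι
  obtain ⟨τ, a, k, W, ha, hWV, hW, hsplit⟩ := exists_isSplitBy_Bset hcard hjm hV hfan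
  refine ⟨prefixTree τ, a, k, ⋃ i, {c i}, W, ⋃ i, U i, prefixTree_finite τ,
    fun s hs r hr => mem_prefixTree_of_prefix hs hr, ha,
    Set.finite_iUnion fun i => Set.finite_singleton (c i),
    hWV.trans (Set.iUnion_subset fun i => (hVX i).trans (Set.subset_iUnion X i)),
    Set.iUnion_subset fun i => (hUX i).trans (Set.subset_iUnion X i), fun i => ?_, hsplit,
    ClustersAt.iUnion hc⟩
  by_cases hi : Clusters i
  · exact (hU ⟨i, hi⟩).mono fun b hb => ⟨hUX _ hb, Or.inr (Set.mem_iUnion.2 ⟨⟨i, hi⟩, hb⟩)⟩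
  · exact (hW ⟨i, hi⟩).mono fun b hb => ⟨hVX _ hb.1, Or.inl hb.2⟩

end SplitOrCluster

theorem stmt7 (i j n m : ℕ) (hij : i + 1 ≤ j) (hin : i < n) (hjm : j < m)
    (A : Set (ℕ × Fin n))
    (hA : ¬ ∃ (a : Finset (Fin n)) (k : ℕ), a.card = i ∧ A ⊆ Bset n a k)
    (H : ℕ × Fin n → ℕ → ℕ × Fin m) :
    ∃ (t : Set (List (ℕ × Fin m))) (F : List (ℕ × Fin m) → Set (ℕ × Fin m))
      (C : Set (ℕ → ℕ × Fin m)) (B₀ B₁ : Set (ℕ × Fin n)),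
      -- `t` is a finite tree of finite sequences, closed under initial segments
      t.Finite ∧ (∀ s ∈ t, ∀ r : List (ℕ × Fin m), r <+: s → r ∈ t) ∧
      -- `F` assigns to each node of `t` a set of the form `B_m(a,k)` with `a` of size `j`
      (∀ τ ∈ t, ∃ (a : Finset (Fin m)) (k : ℕ), a.card = j ∧ F τ = Bset m a k) ∧
      -- `C` is a finite set of infinite sequences
      C.Finite ∧
      -- `B₀, B₁ ⊆ A` and `B₀ ∪ B₁` is contained in no `B_n(a,k)` with `a` of size `i`
      B₀ ⊆ A ∧ B₁ ⊆ A ∧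
      (¬ ∃ (a : Finset (Fin n)) (k : ℕ), a.card = i ∧ B₀ ∪ B₁ ⊆ Bset n a k) ∧
      -- (i) splitting condition on `B₀`
      (∀ b ∈ B₀, ∀ b' ∈ B₀, b ≠ b' →
        ∃ τ ∈ t, ∃ y ∈ F τ, ∃ y' ∈ F τ, y ≠ y' ∧
          IsInitSeg (τ ++ [y]) (H b) ∧ IsInitSeg (τ ++ [y']) (H b')) ∧
      -- (ii) convergence condition on `B₁`
      (∀ N : ℕ,
        {b ∈ B₁ | ∀ c ∈ C, ¬ IsInitSeg ((List.range N).map (H b)) c}.Finite) := by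
  rw [exists_card_eq_subset_Bset_iff hin.le, not_le] at hA
  obtain ⟨S, hSA, hS⟩ : ∃ S ⊆ infiniteColumns A, S.card = i + 1 :=
    Finset.exists_subset_card_eq hA
  have hcol : ∀ c : S, {p ∈ A | p.2 = c}.Infinite := fun c => mem_infiniteColumns.1 (hSA c.2)
  have hcard : Fintype.card S ≤ j := by rwa [Fintype.card_coe, hS]
  obtain ⟨t, a, k, C, B₀, B₁, ht, htree, ha, hC, hB₀, hB₁, hB, hsplit, hclus⟩ :=
    exists_isSplitBy_clustersAt hcard hjm.le H hcol
  have hcolA : ⋃ c : S, {p ∈ A | p.2 = c} ⊆ A := Set.iUnion_subset fun c => Set.sep_subset A _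
  refine ⟨t, fun _ => Bset m a k, C, B₀, B₁, ht, htree, fun _ _ => ⟨a, k, ha, rfl⟩, hC,
    hB₀.trans hcolA, hB₁.trans hcolA, ?_, hsplit, hclus⟩
  rw [exists_card_eq_subset_Bset_iff hin.le, not_le, Nat.lt_iff_add_one_le, ← hS]
  refine Finset.card_le_card fun c hc => mem_infiniteColumns.2 ?_
  exact (hB ⟨c, hc⟩).mono fun p hp => ⟨hp.2, hp.1.2⟩
end

section
/- For integers j, n, m with j < n ≤ m, the least cardinality of a family 𝓣 of 𝓑_n^j-trees such that every element of (ω × {0,…,n−1})^ω lies in the closure of some tree in 𝓣 is equal to the least cardinality of a family 𝓢 of 𝓑_m^j-trees such that every element of (ω × {0,…,m−1})^ω lies in the closure of some tree in 𝓢. Equivalently, cov(𝓙_{𝓑_n^j}) = cov(𝓙_{𝓑_m^j}). -/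
open Cardinal

/-- A `𝓑_n^i`-tree: a set of finite sequences from `ω × {0,…,n−1}`, closed under initial
segments, in which the set of immediate successors of each node is contained in some
`B_n(a,k)` with `a` an `i`-element subset of `{0,…,n−1}`. -/
def IsBnTree (n i : ℕ) (T : Set (List (ℕ × Fin n))) : Prop :=
  (∀ s ∈ T, ∀ r : List (ℕ × Fin n), r <+: s → r ∈ T) ∧
  ∀ t ∈ T, ∃ (a : Finset (Fin n)) (k : ℕ), a.card = i ∧
    {x : ℕ × Fin n | t ++ [x] ∈ T} ⊆ Bset n a k

/-- The closure of a tree of finite sequences: all infinite branches through it. -/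
def treeClosure {Y : Type*} (T : Set (List Y)) : Set (ℕ → Y) :=
  {f | ∀ N : ℕ, (List.range N).map f ∈ T}

/-- `cov(𝓙_{𝓑_n^i})`: the least cardinality of a family of `𝓑_n^i`-trees whose closures
cover `(ω × {0,…,n−1})^ω`. -/
noncomputable def covB (n i : ℕ) : Cardinal :=
  sInf {c : Cardinal | ∃ 𝓣 : Set (Set (List (ℕ × Fin n))),
    (∀ T ∈ 𝓣, IsBnTree n i T) ∧
    (∀ f : ℕ → ℕ × Fin n, ∃ T ∈ 𝓣, f ∈ treeClosure T) ∧ #𝓣 = c}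

/-!
Call a colour unbounded at a node if the node has successors of that colour with arbitrarily large
first coordinate; for `i ≤ n`, a `𝓑_n^i`-tree is a tree with at most `i` unbounded colours at every
node. Recolouring along `g : Fin m → Fin n` sends the unbounded colours of a pulled-back tree to
unbounded colours of the original one. Intersect the pullbacks of `𝓑_n^j`-trees `T g` along *all*
maps `g`. If some `j + 1 ≤ n` colours were unbounded at a node of this intersection, a `g` that is
injective on them would produce `j + 1` unbounded colours in `T g`. So every covering family `𝓣` of
`𝓑_n^j`-trees yields one of `𝓑_m^j`-trees with at most `#𝓣 ^ (n ^ m)` members, and this is `#𝓣`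
because, for `j < n`, diagonalization shows that no countable family covers. The resulting bound
of `covB m j` by `covB n j` makes no comparison between `n` and `m`, so their roles can be swapped.
-/

section Diagonalization

variable {Y : Type*}

theorem exists_forall_notMem_treeClosure {T : ℕ → Set (List Y)}
    (hT : ∀ k t, ∃ x, t ++ [x] ∉ T k) : ∃ f : ℕ → Y, ∀ k, f ∉ treeClosure (T k) := by
  choose x hx using hT
  let L : ℕ → List Y := Nat.rec [] fun k t => t ++ [x k t]
  have map_range_eq (k : ℕ) : (List.range k).map (fun l => x l (L l)) = L k := by
    induction k with
    | zero => rfl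
    | succ k ih => rw [List.range_succ, List.map_append, ih]; rfl
  refine ⟨fun k => x k (L k), fun k hk => hx k (L k) ?_⟩
  have mem_T := hk (k + 1)
  rwa [map_range_eq] at mem_T

end Diagonalization

section UnboundedColours

variable {α β : Type*}

/-- The colours that are unbounded at the node `t` of `T`: those `c` for which `t ++ [(k, c)] ∈ T`
holds for arbitrarily large `k`. -/
def unboundedColours (T : Set (List (ℕ × α))) (t : List (ℕ × α)) : Set α :=
  {c | ¬ BddAbove {k | t ++ [(k, c)] ∈ T}}

/-- The common pullback, along all recolourings `g : α → β`, of a family of trees indexed by these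
recolourings. -/
def colourPullback (T : (α → β) → Set (List (ℕ × β))) : Set (List (ℕ × α)) :=
  {t | ∀ g, t.map (Prod.map id g) ∈ T g}

theorem mem_treeClosure_colourPullback {T : (α → β) → Set (List (ℕ × β))} {f : ℕ → ℕ × α} :
    f ∈ treeClosure (colourPullback T) ↔ ∀ g, Prod.map id g ∘ f ∈ treeClosure (T g) := by
  simp only [treeClosure, colourPullback, Set.mem_ofPred_eq, List.map_map]
  exact forall_comm

theorem mapsTo_unboundedColours_colourPullback (T : (α → β) → Set (List (ℕ × β)))
    (t : List (ℕ × α)) (g : α → β) :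
    Set.MapsTo g (unboundedColours (colourPullback T) t)
      (unboundedColours (T g) (t.map (Prod.map id g))) := by
  intro c hc hbdd
  refine hc (hbdd.mono fun k hk => ?_)
  simpa using hk g

end UnboundedColours

section BnTree

variable {n m i j : ℕ}

theorem IsBnTree.ncard_unboundedColours_le {T : Set (List (ℕ × Fin n))} (hT : IsBnTree n i T)
    (t : List (ℕ × Fin n)) : (unboundedColours T t).ncard ≤ i := by
  by_cases ht : t ∈ T
  · obtain ⟨a, k, rfl, hsub⟩ := hT.2 t ht
    have unbounded_subset : unboundedColours T t ⊆ a := by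
      intro c hc
      by_contra hca
      exact hc ⟨k, fun l hl => ((hsub hl).resolve_left hca).1.le⟩
    simpa using Set.ncard_le_ncard unbounded_subset
  · have unbounded_empty : unboundedColours T t = ∅ := by
      refine Set.eq_empty_of_forall_notMem fun c hc => hc ⟨0, fun k hk => ?_⟩
      exact absurd (hT.1 _ hk t (List.prefix_append _ _)) ht
    simp [unbounded_empty]

theorem isBnTree_of_ncard_unboundedColours_le (hi : i ≤ n) {T : Set (List (ℕ × Fin n))}
    (hprefix : ∀ s ∈ T, ∀ r, r <+: s → r ∈ T)
    (hcard : ∀ t ∈ T, (unboundedColours T t).ncard ≤ i) : IsBnTree n i T := by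
  classical
  refine ⟨hprefix, fun t ht => ?_⟩
  obtain ⟨a, hUa, ha⟩ := Finset.exists_superset_card_eq
    (s := (unboundedColours T t).toFinset) (n := i)
    (by simpa [Set.ncard_eq_toFinset_card'] using hcard t ht) (by simpa using hi)
  have bounded_of_notMem (c : Fin n) : ∃ b, c ∉ a → ∀ k, t ++ [(k, c)] ∈ T → k ≤ b := by
    by_cases hc : c ∈ a
    · exact ⟨0, fun h => absurd hc h⟩
    · obtain ⟨b, hb⟩ := not_not.1 fun h => hc (hUa (Set.mem_toFinset.2 h))
      exact ⟨b, fun _ k hk => hb hk⟩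
  choose b hb using bounded_of_notMem
  refine ⟨a, Finset.univ.sup b + 1, ha, fun ⟨k, c⟩ hk => ?_⟩
  by_cases hc : c ∈ a
  · exact Or.inl hc
  · exact Or.inr ⟨Nat.lt_succ_of_le
      ((hb c hc k hk).trans (Finset.le_sup (Finset.mem_univ c))), hc⟩

theorem IsBnTree.exists_append_singleton_notMem (hin : i < n) {T : Set (List (ℕ × Fin n))}
    (hT : IsBnTree n i T) (t : List (ℕ × Fin n)) : ∃ x, t ++ [x] ∉ T := by
  obtain ⟨c, hc⟩ : ∃ c, c ∉ unboundedColours T t := by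
    by_contra! hall
    have ncard_le := hT.ncard_unboundedColours_le t
    rw [Set.eq_univ_of_forall hall, Set.ncard_univ, Nat.card_fin] at ncard_le
    omega
  obtain ⟨b, hb⟩ := not_not.1 hc
  exact ⟨(b + 1, c), fun h => Nat.not_succ_le_self b (hb h)⟩

theorem isBnTree_range_map_range (hi : i ≤ n) (f : ℕ → ℕ × Fin n) :
    IsBnTree n i (Set.range fun N => (List.range N).map f) := by
  refine isBnTree_of_ncard_unboundedColours_le hi ?_ ?_
  · rintro _ ⟨N, rfl⟩ r hr
    refine ⟨min r.length N, ?_⟩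
    rw [List.prefix_iff_eq_take.1 hr, ← List.map_take, List.take_range]
    simp
  · rintro _ ⟨N, rfl⟩
    have unbounded_empty :
        unboundedColours (Set.range fun N => (List.range N).map f) ((List.range N).map f) = ∅ := by
      refine Set.eq_empty_of_forall_notMem fun c hc => hc ⟨(f N).1, ?_⟩
      rintro k ⟨M, hM⟩
      obtain rfl : M = N + 1 := by simpa using congrArg List.length hM
      have f_eq : f N = (k, c) := by simpa [List.range_succ] using hM
      rw [f_eq]
    simp [unbounded_empty]

theorem isBnTree_colourPullback (hjn : j < n) (hjm : j ≤ m)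
    {T : (Fin m → Fin n) → Set (List (ℕ × Fin n))} (hT : ∀ g, IsBnTree n j (T g)) :
    IsBnTree m j (colourPullback T) := by
  refine isBnTree_of_ncard_unboundedColours_le hjm
    (fun s hs r hr g => (hT g).1 _ (hs g) _ (hr.map _)) fun t _ => ?_
  by_contra! hlt
  obtain ⟨S, hSU, hS⟩ := Set.exists_subset_card_eq (Nat.succ_le_of_lt hlt)
  have : Nonempty (Fin n) := ⟨⟨j, hjn⟩⟩
  obtain ⟨g, -, hg⟩ : ∃ g : Fin m → Fin n, S ⊆ g ⁻¹' Set.univ ∧ S.InjOn g := by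
    refine S.toFinite.exists_injOn_of_encard_le ?_
    rw [← S.toFinite.cast_ncard_eq, hS, Set.encard_univ, ENat.card_eq_coe_fintype_card,
      Fintype.card_fin]
    exact_mod_cast hjn
  have image_subset : g '' S ⊆ unboundedColours (T g) (t.map (Prod.map id g)) :=
    ((mapsTo_unboundedColours_colourPullback T t g).mono_left hSU).image_subset
  have succ_le : j + 1 ≤ j := calc
    j + 1 = (g '' S).ncard := by rw [hg.ncard_image, hS]
    _ ≤ (unboundedColours (T g) (t.map (Prod.map id g))).ncard := Set.ncard_le_ncard image_subset
    _ ≤ j := (hT g).ncard_unboundedColours_le _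
  omega

end BnTree

section TreeCover

variable {n m i j : ℕ}

/-- The families of `𝓑_n^i`-trees whose closures cover `(ω × {0,…,n−1})^ω`, over which `covB n i`
takes the least cardinality. -/
def IsTreeCover (n i : ℕ) (𝓣 : Set (Set (List (ℕ × Fin n)))) : Prop :=
  (∀ T ∈ 𝓣, IsBnTree n i T) ∧ ∀ f : ℕ → ℕ × Fin n, ∃ T ∈ 𝓣, f ∈ treeClosure T

theorem isTreeCover_setOf_isBnTree (hi : i ≤ n) : IsTreeCover n i {T | IsBnTree n i T} :=
  ⟨fun _ hT => hT, fun f => ⟨_, isBnTree_range_map_range hi f, Set.mem_range_self⟩⟩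

theorem IsTreeCover.covB_le {𝓣 : Set (Set (List (ℕ × Fin n)))} (h𝓣 : IsTreeCover n i 𝓣) :
    covB n i ≤ #𝓣 :=
  csInf_le' ⟨𝓣, h𝓣.1, h𝓣.2, rfl⟩

theorem exists_isTreeCover_mk_eq_covB (hi : i ≤ n) : ∃ 𝓣, IsTreeCover n i 𝓣 ∧ #𝓣 = covB n i := by
  have hcover := isTreeCover_setOf_isBnTree hi
  obtain ⟨𝓣, htree, hcov, hcard⟩ : covB n i ∈ _ := csInf_mem ⟨_, _, hcover.1, hcover.2, rfl⟩
  exact ⟨𝓣, ⟨htree, hcov⟩, hcard⟩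

theorem IsTreeCover.not_countable (hin : i < n) {𝓣 : Set (Set (List (ℕ × Fin n)))}
    (h𝓣 : IsTreeCover n i 𝓣) : ¬ 𝓣.Countable := by
  intro hcount
  obtain ⟨T₀, hT₀, -⟩ := h𝓣.2 fun _ => (0, ⟨i, hin⟩)
  obtain ⟨T, rfl⟩ := hcount.exists_eq_range ⟨T₀, hT₀⟩
  obtain ⟨f, hf⟩ := exists_forall_notMem_treeClosure fun k =>
    (h𝓣.1 (T k) (Set.mem_range_self k)).exists_append_singleton_notMem hin
  obtain ⟨_, ⟨k, rfl⟩, hk⟩ := h𝓣.2 f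
  exact hf k hk

theorem IsTreeCover.range_colourPullback (hjn : j < n) (hjm : j ≤ m)
    {𝓣 : Set (Set (List (ℕ × Fin n)))} (h𝓣 : IsTreeCover n j 𝓣) :
    IsTreeCover m j
      (Set.range fun T : (Fin m → Fin n) → 𝓣 => colourPullback fun g => (T g : Set _)) := by
  constructor
  · rintro _ ⟨T, rfl⟩
    exact isBnTree_colourPullback hjn hjm fun g => h𝓣.1 _ (T g).2
  · intro f
    choose T hT hf using fun g : Fin m → Fin n => h𝓣.2 (Prod.map id g ∘ f)
    exact ⟨_, ⟨fun g => ⟨T g, hT g⟩, rfl⟩, mem_treeClosure_colourPullback.2 hf⟩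

theorem covB_le_covB (hjn : j < n) (hjm : j ≤ m) : covB m j ≤ covB n j := by
  obtain ⟨𝓣, h𝓣, hcard⟩ := exists_isTreeCover_mk_eq_covB hjn.le
  have aleph0_le : ℵ₀ ≤ #𝓣 := by
    rw [← not_lt]
    exact fun hlt => h𝓣.not_countable hjn (Cardinal.le_aleph0_iff_set_countable.1 hlt.le)
  calc
    covB m j ≤ #(Set.range fun T : (Fin m → Fin n) → 𝓣 => colourPullback fun g => (T g : Set _)) :=
      (h𝓣.range_colourPullback hjn hjm).covB_le
    _ ≤ #((Fin m → Fin n) → 𝓣) := mk_range_le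
    _ = #𝓣 ^ Fintype.card (Fin m → Fin n) := by
      rw [← Cardinal.power_def, Cardinal.mk_fintype (Fin m → Fin n), Cardinal.power_natCast]
    _ ≤ #𝓣 := Cardinal.power_nat_le aleph0_le
    _ = covB n j := hcard

end TreeCover

theorem stmt8 (j n m : ℕ) (hjn : j < n) (hnm : n ≤ m) : covB n j = covB m j :=
  le_antisymm (covB_le_covB (hjn.trans_le hnm) hjn.le) (covB_le_covB hjn (hjn.le.trans hnm))
end

section
/- Let 𝓑 be a cover on a countably infinite set X and let (T_n)_{n∈ω} be a countable family of 𝓑-trees. Then the union of the closures T̄_n is not all of X^ω; that is, there exists f ∈ X^ω such that for every n some finite initial segment of f is not in T_n. (In particular the σ-ideal 𝓙_𝓑 generated by closures of 𝓑-trees is a proper ideal.) -/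
/-- A cover on a (countable) set `X`: a countable family of subsets of `X` not containing
`X` itself and closed under adding finite sets. -/
def IsCover {X : Type*} (B : Set (Set X)) : Prop :=
  B.Countable ∧ Set.univ ∉ B ∧ ∀ A ∈ B, ∀ b : Set X, b.Finite → A ∪ b ∈ B

/-- A `𝓑`-tree: a set of finite sequences from `X`, closed under initial segments, in which
the set of immediate successors of each node is contained in some member of `𝓑`. -/
def IsBTree {X : Type*} (B : Set (Set X)) (T : Set (List X)) : Prop :=
  (∀ s ∈ T, ∀ r : List X, r <+: s → r ∈ T) ∧
  ∀ t ∈ T, ∃ A ∈ B, {x : X | t ++ [x] ∈ T} ⊆ A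

/-!
Diagonalise along a countable enumeration of the trees. Build `f` one value at a time. At the stage
assigned to the tree `T i`, either the current finite sequence has already left `T i`, or its
successors in `T i` lie in a member of the cover, hence do not exhaust `X`, and the next value of
`f` can be chosen among the remaining points.
-/

theorem exists_forall_rel_map_range {X : Type*} {R : List X → X → Prop}
    (hR : ∀ s, ∃ x, R s x) : ∃ f : ℕ → X, ∀ n, R ((List.range n).map f) (f n) := by
  choose next h_next using hR
  let extend : List X → List X := fun s => s ++ [next s]
  let history : ℕ → List X := fun n => extend^[n] []
  have map_range_eq_history (n : ℕ) :
      (List.range n).map (fun k => next (history k)) = history n := by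
    induction n with
    | zero => rfl
    | succ n ih =>
      rw [List.range_succ, List.map_append, ih]
      exact (Function.iterate_succ_apply' extend n []).symm
  refine ⟨fun k => next (history k), fun n => ?_⟩
  rw [map_range_eq_history]
  exact h_next (history n)

theorem iUnion_treeClosure_ne_univ_iff {X : Type*} {ι : Sort*} {T : ι → Set (List X)} :
    (⋃ i, treeClosure (T i)) ≠ Set.univ ↔
      ∃ f : ℕ → X, ∀ i, ∃ N : ℕ, (List.range N).map f ∉ T i := by
  simp [Set.ne_univ_iff_exists_notMem, treeClosure]

theorem IsBTree.exists_append_singleton_notMem {X : Type*} {B : Set (Set X)} {T : Set (List X)}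
    (hT : IsBTree B T) (hB : Set.univ ∉ B) {t : List X} (ht : t ∈ T) :
    ∃ x, t ++ [x] ∉ T := by
  by_contra! h_full
  obtain ⟨A, hA, h_succ⟩ := hT.2 t ht
  have hA_univ : A = Set.univ := Set.eq_univ_of_forall fun x => h_succ (h_full x)
  exact hB (hA_univ ▸ hA)

theorem exists_forall_exists_map_range_notMem {X : Type*} {ι : Sort*} [Nonempty X] [Countable ι]
    {T : ι → Set (List X)} (hT : ∀ i, ∀ t ∈ T i, ∃ x, t ++ [x] ∉ T i) :
    ∃ f : ℕ → X, ∀ i, ∃ N : ℕ, (List.range N).map f ∉ T i := by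
  rcases isEmpty_or_nonempty ι with _ | _
  · exact ⟨Classical.arbitrary (ℕ → X), isEmptyElim⟩
  obtain ⟨enum, h_enum⟩ := exists_surjective_nat ι
  have exists_next (s : List X) :
      ∃ x, s ∈ T (enum s.length) → s ++ [x] ∉ T (enum s.length) := by
    by_cases hs : s ∈ T (enum s.length)
    · exact (hT _ s hs).imp fun _ hx _ => hx
    · exact ⟨Classical.arbitrary X, fun h => absurd h hs⟩
  obtain ⟨f, hf⟩ := exists_forall_rel_map_range exists_next
  refine ⟨f, h_enum.forall.mpr fun n => ?_⟩
  by_cases hs : (List.range n).map f ∈ T (enum n)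
  · refine ⟨n + 1, ?_⟩
    rw [List.range_succ, List.map_append, List.map_singleton]
    simpa only [List.length_map, List.length_range, hs, true_imp_iff] using hf n
  · exact ⟨n, hs⟩

theorem stmt10_general {X : Type*} {ι : Sort*} [Nonempty X] [Countable ι]
    (T : ι → Set (List X)) (hT : ∀ i, ∀ t ∈ T i, ∃ x, t ++ [x] ∉ T i) :
    (⋃ i, treeClosure (T i)) ≠ Set.univ ∧
    ∃ f : ℕ → X, ∀ i, ∃ N : ℕ, (List.range N).map f ∉ T i :=
  have h_escape := exists_forall_exists_map_range_notMem hT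
  ⟨iUnion_treeClosure_ne_univ_iff.mpr h_escape, h_escape⟩

theorem stmt10 {X : Type*} [Countable X] [Infinite X]
    (B : Set (Set X)) (hB : IsCover B)
    (T : ℕ → Set (List X)) (hT : ∀ n, IsBTree B (T n)) :
    (⋃ n, treeClosure (T n)) ≠ Set.univ ∧
    ∃ f : ℕ → X, ∀ n : ℕ, ∃ N : ℕ, (List.range N).map f ∉ T n :=
  stmt10_general T fun n _ ht => (hT n).exists_append_singleton_notMem hB.2.1 ht
end
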